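/- Let $X \subseteq \mathbb{P}^{n+e}$ be a non-degenerate closed subscheme of dimension $n$ and reduction number $r$. Then $\deg(X) = \binom{e+r}{r}$ if and only if the homogeneous coordinate ring $R$ of $X$ is Cohen-Macaulay and has an $(r+1)$-linear minimal free resolution. -/

import Mathlib

set_option synthInstance.maxHeartbeats 1000000
set_option maxHeartbeats 2000000

noncomputable section

open MvPolynomial

namespace Paper

variable (k : Type) [Field k]

/-- The degree-`d` graded component of `S₀/I` as a `k`-subspace. -/
def quotComponent {N : ℕ} (I : Ideal (MvPolynomial (Fin N) k)) (d : ℕ) :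
    Submodule k (MvPolynomial (Fin N) k ⧸ I) :=
  (MvPolynomial.homogeneousSubmodule (Fin N) k d).map
    (Ideal.Quotient.mkₐ k I).toLinearMap

/-- Hilbert function of `S₀/I`. -/
def hilbFn {N : ℕ} (I : Ideal (MvPolynomial (Fin N) k)) (d : ℕ) : ℕ :=
  Module.finrank k (quotComponent k I d)

/-- `I` is a homogeneous ideal. -/
def IdealHomog {N : ℕ} (I : Ideal (MvPolynomial (Fin N) k)) : Prop :=
  ∀ f ∈ I, ∀ d : ℕ, MvPolynomial.homogeneousComponent d f ∈ I

/-- `I` is saturated with respect to the irrelevant maximal ideal. -/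
def IsSaturatedIdeal {N : ℕ} (I : Ideal (MvPolynomial (Fin N) k)) : Prop :=
  ∀ f : MvPolynomial (Fin N) k, (∀ i : Fin N, MvPolynomial.X i * f ∈ I) → f ∈ I

/-- The subscheme defined by `I` is non-degenerate: `I` contains no nonzero linear form. -/
def Nondegenerate {N : ℕ} (I : Ideal (MvPolynomial (Fin N) k)) : Prop :=
  ∀ f ∈ I, f.IsHomogeneous 1 → f = 0

/-- `S₀/I` has Hilbert polynomial of degree `n` and multiplicity (degree) `D`. -/
def HasDeg {N : ℕ} (I : Ideal (MvPolynomial (Fin N) k)) (n D : ℕ) : Prop :=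
  ∃ P : Polynomial ℚ, P.natDegree = n ∧ (D : ℚ) = P.leadingCoeff * (n.factorial : ℚ) ∧
    ∀ᶠ d : ℕ in Filter.atTop, (hilbFn k I d : ℚ) = Polynomial.eval (d : ℚ) P

/-- The irrelevant maximal ideal of `S₀/I`. -/
def irrelevantIdeal {N : ℕ} (I : Ideal (MvPolynomial (Fin N) k)) :
    Ideal (MvPolynomial (Fin N) k ⧸ I) :=
  Ideal.span (Set.range fun i : Fin N => Ideal.Quotient.mk I (MvPolynomial.X i))

/-- `S₀/I` is Cohen-Macaulay of dimension `c`: there is a regular sequence of length `c`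
in the irrelevant maximal ideal. -/
def IsCMQuot {N : ℕ} (I : Ideal (MvPolynomial (Fin N) k)) (c : ℕ) : Prop :=
  ∃ rs : List (MvPolynomial (Fin N) k ⧸ I), rs.length = c ∧
    (∀ x ∈ rs, x ∈ irrelevantIdeal k I) ∧
    RingTheory.Sequence.IsRegular (MvPolynomial (Fin N) k ⧸ I) rs

/-- The ideal of `R = S₀/I` generated by the images of `x_e, …, x_{N-1}`. -/
def tailVarsIdeal {N : ℕ} (e : ℕ) (I : Ideal (MvPolynomial (Fin N) k)) :
    Ideal (MvPolynomial (Fin N) k ⧸ I) :=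
  Ideal.span {y | ∃ i : Fin N, e ≤ (i : ℕ) ∧ y = Ideal.Quotient.mk I (MvPolynomial.X i)}

/-- The reduction number `r_S(R)` of the Noether normalization by the last variables:
the least `t > 0` with `R_{t+1} = J_{t+1}` for `J = (x_e, …, x_{N-1})R`. -/
def reductionNumber {N : ℕ} (e : ℕ) (I : Ideal (MvPolynomial (Fin N) k)) : ℕ :=
  sInf {t | 0 < t ∧ quotComponent k I (t + 1) ≤ (tailVarsIdeal k e I).restrictScalars k}

/-- The reduction number `r(R)`: the minimum of `r_J(R₊)` over all minimal reductions `J`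
of `R₊`, i.e. ideals generated by `c = dim R` linear forms. -/
def redNumAll {N : ℕ} (I : Ideal (MvPolynomial (Fin N) k)) (c : ℕ) : ℕ :=
  sInf {t | 0 < t ∧ ∃ L : Finset (MvPolynomial (Fin N) k ⧸ I),
    (L : Set (MvPolynomial (Fin N) k ⧸ I)) ⊆ quotComponent k I 1 ∧ L.card = c ∧
    quotComponent k I (t + 1) ≤
      (Ideal.span (L : Set (MvPolynomial (Fin N) k ⧸ I))).restrictScalars k}

/-- The `k`-algebra map `S = k[x_e, …, x_{N-1}] → R = S₀/I`. -/
def nnMap {N : ℕ} (e : ℕ) (I : Ideal (MvPolynomial (Fin N) k)) :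
    MvPolynomial {i : Fin N // e ≤ (i : ℕ)} k →ₐ[k] (MvPolynomial (Fin N) k ⧸ I) :=
  MvPolynomial.aeval fun i => Ideal.Quotient.mk I (MvPolynomial.X i.1)

/-- `S = k[x_e, …, x_{N-1}] → R = S₀/I` is a Noether normalization. -/
def IsNoetherNormalization {N : ℕ} (e : ℕ) (I : Ideal (MvPolynomial (Fin N) k)) : Prop :=
  Function.Injective (nnMap k e I) ∧ (nnMap k e I).toRingHom.Finite

/-- `μ_S(R) = dim_k R/S₊R`, the minimal number of generators of `R` as an `S`-module. -/
def muS {N : ℕ} (e : ℕ) (I : Ideal (MvPolynomial (Fin N) k)) : ℕ :=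
  Module.finrank k ((MvPolynomial (Fin N) k ⧸ I) ⧸ tailVarsIdeal k e I)

/-- total degree of an exponent vector -/
def tdeg {N : ℕ} (a : Fin N →₀ ℕ) : ℕ := a.sum fun _ n => n

/-- degree reverse lexicographic order with `x_0 > x_1 > ⋯ > x_{N-1}`. -/
def drlLt {N : ℕ} (a b : Fin N →₀ ℕ) : Prop :=
  tdeg a < tdeg b ∨
    (tdeg a = tdeg b ∧ ∃ i : Fin N, b i < a i ∧ ∀ j : Fin N, i < j → a j = b j)

/-- `m` is the leading (largest, w.r.t. degrevlex) exponent of `p`. -/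
def IsLeadExp {N : ℕ} (p : MvPolynomial (Fin N) k) (m : Fin N →₀ ℕ) : Prop :=
  m ∈ p.support ∧ ∀ m' ∈ p.support, m' ≠ m → drlLt m' m

/-- The initial ideal of `I` with respect to the degree reverse lexicographic order. -/
def initialIdeal {N : ℕ} (I : Ideal (MvPolynomial (Fin N) k)) :
    Ideal (MvPolynomial (Fin N) k) :=
  Ideal.span {q | ∃ p ∈ I, ∃ m, IsLeadExp k p m ∧ q = MvPolynomial.monomial m 1}

/-- `p` is homogeneous of degree `d ∈ ℤ` (`0` if `d < 0`). -/
def HomogOfDeg {σ : Type} (p : MvPolynomial σ k) (d : ℤ) : Prop :=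
  p = 0 ∨ ∃ m : ℕ, (m : ℤ) = d ∧ p.IsHomogeneous m

/-- A minimal graded free resolution of the graded module `M` (with grading `Mdeg`) over
`A = k[σ]`, recording the graded Betti numbers `β i j = dim_k Tor_i^A(M,k)_{i+j}`:
the `i`-th free module has `β i j` generators in internal degree `i + j`. -/
structure MinGradedFreeRes (σ : Type) (M : Type) [AddCommGroup M]
    [Module (MvPolynomial σ k) M] [Module k M] (Mdeg : ℤ → Submodule k M) where
  β : ℕ → ℤ → ℕ
  rowFinite : ∀ i, (Function.support (β i)).Finite
  d : ∀ i : ℕ, (((j : ℤ) × Fin (β (i + 1) j)) →₀ MvPolynomial σ k) →ₗ[MvPolynomial σ k]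
      ((j : ℤ) × Fin (β i j)) →₀ MvPolynomial σ k
  ε : (((j : ℤ) × Fin (β 0 j)) →₀ MvPolynomial σ k) →ₗ[MvPolynomial σ k] M
  graded : ∀ (i : ℕ) (j j' : ℤ) (s : Fin (β (i + 1) j)) (s' : Fin (β i j')),
      HomogOfDeg k (d i (Finsupp.single ⟨j, s⟩ 1) ⟨j', s'⟩) (j + 1 - j')
  minimal : ∀ (i : ℕ) (j j' : ℤ) (s : Fin (β (i + 1) j)) (s' : Fin (β i j')),
      j' = j + 1 → d i (Finsupp.single ⟨j, s⟩ 1) ⟨j', s'⟩ = 0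
  eps_graded : ∀ (j : ℤ) (s : Fin (β 0 j)), ε (Finsupp.single ⟨j, s⟩ 1) ∈ Mdeg j
  eps_surj : Function.Surjective ε
  exact0 : Function.Exact (d 0) ε
  exactSeq : ∀ i : ℕ, Function.Exact (d (i + 1)) (d i)

/-- `Mdeg` is a grading of the `k[σ]`-module `M`. -/
def IsGrading (σ : Type) (M : Type) [AddCommGroup M]
    [Module (MvPolynomial σ k) M] [Module k M] (Mdeg : ℤ → Submodule k M) : Prop :=
  (⨆ d, Mdeg d) = ⊤ ∧ iSupIndep Mdeg ∧
    ∀ (i : σ) (d : ℤ), ∀ x ∈ Mdeg d, (MvPolynomial.X i : MvPolynomial σ k) • x ∈ Mdeg (d + 1)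

/-- The standard grading on `S₀/I` (indexed by `ℤ`). -/
def quotDeg {N : ℕ} (I : Ideal (MvPolynomial (Fin N) k)) (d : ℤ) :
    Submodule k (MvPolynomial (Fin N) k ⧸ I) :=
  if 0 ≤ d then quotComponent k I d.toNat else ⊥

/-- The standard grading on a homogeneous ideal `I ⊆ S₀` (indexed by `ℤ`). -/
def idealDeg {N : ℕ} (I : Ideal (MvPolynomial (Fin N) k)) (d : ℤ) :
    Submodule k ↥I :=
  if 0 ≤ d then
    Submodule.comap ((I.subtype).restrictScalars k)
      (MvPolynomial.homogeneousSubmodule (Fin N) k d.toNat)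
  else ⊥

/-- `χ_m = Σ_{j=0}^m (-1)^j β_{m-j,j}`. -/
def chiOf (β : ℕ → ℤ → ℕ) (m : ℤ) : ℤ :=
  if m < 0 then 0
  else ∑ j ∈ Finset.range (m.toNat + 1), (-1 : ℤ) ^ j * (β (m.toNat - j) (j : ℤ) : ℤ)

/-- projective dimension read off from a minimal resolution's Betti table -/
def pdOf (β : ℕ → ℤ → ℕ) : ℕ∞ :=
  ⨆ i : {i : ℕ // ∃ j, β i j ≠ 0}, ((i : ℕ) : ℕ∞)

/-- index type of the variables `x_t, …, x_{N-1}` -/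
def tailIdx (N t : ℕ) := {i : Fin N // t ≤ (i : ℕ)}


/-- The `S = k[x_e,…,x_{N-1}]`-module structure on `R = S₀/I` via `nnMap`. -/
def nnModule {N : ℕ} (e : ℕ) (I : Ideal (MvPolynomial (Fin N) k)) :
    Module (MvPolynomial {i : Fin N // e ≤ (i : ℕ)} k) (MvPolynomial (Fin N) k ⧸ I) :=
  Module.compHom _ (nnMap k e I).toRingHom

/-- The underlying set of the `S`-submodule of `R = S₀/I` spanned by `s`. -/
def nnSpan {N : ℕ} (e : ℕ) (I : Ideal (MvPolynomial (Fin N) k))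
    (s : Set (MvPolynomial (Fin N) k ⧸ I)) : Set (MvPolynomial (Fin N) k ⧸ I) :=
  letI := nnModule k e I
  (Submodule.span (MvPolynomial {i : Fin N // e ≤ (i : ℕ)} k) s : Set _)

/-- The truncated ideal `(I)_{≥ r+1}`, generated by the homogeneous elements of `I`
of degree at least `r + 1`. -/
def truncIdeal {N : ℕ} (I : Ideal (MvPolynomial (Fin N) k)) (r : ℕ) :
    Ideal (MvPolynomial (Fin N) k) :=
  Ideal.span {f | f ∈ I ∧ ∃ d : ℕ, r + 1 ≤ d ∧ f.IsHomogeneous d}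

end Paper

end

namespace Aux
open MvPolynomial Paper
noncomputable section

/-- integer-indexed homogeneous component -/
def hc {k : Type} [Field k] {σ : Type} (z : ℤ) : MvPolynomial σ k →ₗ[k] MvPolynomial σ k :=
  if 0 ≤ z then homogeneousComponent z.toNat else 0

section basic
variable {k : Type} [Field k] {σ : Type}

lemma hc_nat (m : ℕ) (p : MvPolynomial σ k) : hc (m : ℤ) p = homogeneousComponent m p := by
  simp [hc]

lemma hc_neg {z : ℤ} (hz : z < 0) (p : MvPolynomial σ k) : hc z p = 0 := by
  simp [hc, not_le.mpr hz]

lemma hc_homog (z : ℤ) (p : MvPolynomial σ k) : HomogOfDeg k (hc z p) z := by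
  rcases lt_or_ge z 0 with h | h
  · left; exact hc_neg h p
  · right
    lift z to ℕ using h
    exact ⟨z, rfl, by rw [hc_nat]; exact homogeneousComponent_isHomogeneous z p⟩

lemma homogComp_mul_of_homog {a : MvPolynomial σ k} {m : ℕ} (ha : a.IsHomogeneous m)
    (p : MvPolynomial σ k) (t : ℕ) :
    homogeneousComponent t (p * a) =
      if m ≤ t then homogeneousComponent (t - m) p * a else 0 := by
  classical
  letI : GradedAlgebra (homogeneousSubmodule σ k) := MvPolynomial.gradedAlgebra
  have := DirectSum.coe_decompose_mul_of_right_mem (homogeneousSubmodule σ k) (a := p) (b := a)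
    (i := m) t ((mem_homogeneousSubmodule m a).2 ha)
  rw [← MvPolynomial.decomposition.decompose'_apply, ← MvPolynomial.decomposition.decompose'_apply]
  exact this

lemma hc_mul_homog {a : MvPolynomial σ k} {u : ℤ} (ha : HomogOfDeg k a u)
    (p : MvPolynomial σ k) (z : ℤ) : hc z (p * a) = hc (z - u) p * a := by
  rcases ha with rfl | ⟨m, rfl, ha⟩
  · simp
  rcases lt_or_ge z 0 with h | h
  · rw [hc_neg h, hc_neg (by omega), zero_mul]
  lift z to ℕ using h
  rw [hc_nat, homogComp_mul_of_homog ha]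
  split_ifs with h
  · rw [← Nat.cast_sub h, hc_nat]
  · rw [hc_neg (by omega), zero_mul]

lemma hc_of_homog {a : MvPolynomial σ k} {u : ℤ} (ha : HomogOfDeg k a u) : hc u a = a := by
  rcases ha with rfl | ⟨m, rfl, ha⟩
  · simp
  · rw [hc_nat, homogeneousComponent_of_mem ((mem_homogeneousSubmodule m a).2 ha), if_pos rfl]

lemma hc_of_homog_ne {a : MvPolynomial σ k} {u z : ℤ} (ha : HomogOfDeg k a u) (h : z ≠ u) :
    hc z a = 0 := by
  rcases ha with rfl | ⟨m, rfl, ha⟩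
  · simp
  · rcases lt_or_ge z 0 with h' | h'
    · exact hc_neg h' _
    lift z to ℕ using h'
    rw [hc_nat, homogeneousComponent_of_mem ((mem_homogeneousSubmodule m a).2 ha), if_neg]
    omega

lemma hc_zero_eq (p : MvPolynomial σ k) : hc 0 p = C (constantCoeff p) := by
  have := hc_nat 0 p
  rw [homogeneousComponent_zero] at this
  simpa [constantCoeff_eq] using this

lemma sum_hc (p : MvPolynomial σ k) (B : ℕ) (hB : p.totalDegree < B) :
    ∑ z ∈ Finset.range B, hc (z : ℤ) p = p := by
  conv_rhs => rw [← sum_homogeneousComponent p]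
  simp_rw [hc_nat]
  symm
  apply Finset.sum_subset
  · intro x; simp; omega
  · intro x _ hx
    simp at hx
    exact homogeneousComponent_eq_zero _ _ (by omega)

variable {ι ι' : Type}

/-- graded component of degree `D` in the free module with generator degrees `w` -/
def comp (w : ι → ℤ) (D : ℤ) : (ι →₀ MvPolynomial σ k) →ₗ[k] (ι →₀ MvPolynomial σ k) :=
  Finsupp.lsum k (fun x => (Finsupp.lsingle x : MvPolynomial σ k →ₗ[k] _) ∘ₗ hc (D - w x))

lemma comp_single (w : ι → ℤ) (D : ℤ) (x : ι) (p : MvPolynomial σ k) :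
    comp w D (Finsupp.single x p) = Finsupp.single x (hc (D - w x) p) := by
  simp [comp]

lemma comp_apply (w : ι → ℤ) (D : ℤ) (f : ι →₀ MvPolynomial σ k) (x : ι) :
    comp w D f x = hc (D - w x) (f x) := by
  classical
  induction f using Finsupp.induction_linear with
  | zero => simp
  | add f g hf hg => simp [hf, hg]
  | single y p =>
    rw [comp_single]
    by_cases h : y = x
    · subst h; simp
    · simp [h]

lemma comp_comm {w : ι → ℤ} {w' : ι' → ℤ}
    (d : (ι →₀ MvPolynomial σ k) →ₗ[MvPolynomial σ k] (ι' →₀ MvPolynomial σ k))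
    (hd : ∀ x y, HomogOfDeg k (d (Finsupp.single x 1) y) (w x - w' y)) (D : ℤ)
    (f : ι →₀ MvPolynomial σ k) : d (comp w D f) = comp w' D (d f) := by
  induction f using Finsupp.induction_linear with
  | zero => simp
  | add f g hf hg => simp [hf, hg]
  | single x p =>
    have key : ∀ q : MvPolynomial σ k, d (Finsupp.single x q) = q • d (Finsupp.single x 1) := by
      intro q; rw [← map_smul]; simp
    rw [comp_single, key, key p]
    ext1 y
    rw [comp_apply]
    simp only [Finsupp.smul_apply, smul_eq_mul]
    rw [hc_mul_homog (hd x y)]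
    congr 2; ring_nf

/-- homogeneous elements of a graded free module -/
def HF (w : ι → ℤ) (D : ℤ) (f : ι →₀ MvPolynomial σ k) : Prop :=
  ∀ x, HomogOfDeg k (f x) (D - w x)

lemma HF_comp (w : ι → ℤ) (D : ℤ) (f : ι →₀ MvPolynomial σ k) : HF w D (comp w D f) := by
  intro x; rw [comp_apply]; exact hc_homog _ _

lemma comp_of_HF {w : ι → ℤ} {D : ℤ} {f : ι →₀ MvPolynomial σ k} (h : HF w D f) :
    comp w D f = f := by
  ext1 x; rw [comp_apply, hc_of_homog (h x)]

lemma HF_iff {w : ι → ℤ} {D : ℤ} {f : ι →₀ MvPolynomial σ k} : HF w D f ↔ comp w D f = f :=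
  ⟨comp_of_HF, fun h => h ▸ HF_comp w D f⟩

lemma mem_span_comp [Finite ι] (w : ι → ℤ) (f : ι →₀ MvPolynomial σ k) :
    f ∈ Submodule.span k (Set.range fun D => comp w D f) := by
  classical
  cases nonempty_fintype ι
  let B : ℕ := (∑ x, (f x).totalDegree) + 1
  let T : Finset ℤ := (Finset.univ ×ˢ Finset.range B).image (fun q : ι × ℕ => (q.2 : ℤ) + w q.1)
  have : f = ∑ D ∈ T, comp w D f := by
    ext1 x
    rw [Finsupp.finsetSum_apply]
    simp_rw [comp_apply]
    have hB : (f x).totalDegree < B := by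
      have := Finset.single_le_sum (f := fun x => (f x).totalDegree) (fun _ _ => Nat.zero_le _)
        (Finset.mem_univ x)
      omega
    conv_lhs => rw [← sum_hc (f x) B hB]
    have e1 : ∑ z ∈ Finset.range B, hc (z : ℤ) (f x) =
        ∑ D ∈ (Finset.range B).image (fun z : ℕ => (z : ℤ) + w x), hc (D - w x) (f x) := by
      rw [Finset.sum_image]
      · simp
      · intro a _ b _ h; simpa using h
    rw [e1]
    apply Finset.sum_subset
    · intro D hD
      simp only [Finset.mem_image, T] at hD ⊢
      obtain ⟨z, hz, rfl⟩ := hD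
      exact ⟨(x, z), by simpa using hz, rfl⟩
    · intro D _ hD
      rcases lt_or_ge (D - w x) 0 with h | h
      · exact hc_neg h _
      · obtain ⟨m, hm⟩ := Int.eq_ofNat_of_zero_le h
        rw [hm, hc_nat]
        apply homogeneousComponent_eq_zero
        by_contra hlt
        apply hD
        simp only [Finset.mem_image, Finset.mem_range]
        exact ⟨m, by omega, by omega⟩
  rw [this]
  refine Submodule.sum_mem _ fun D _ => Submodule.subset_span ⟨D, ?_⟩
  simp only
  rw [← this]

end basic
end
end Aux

namespace Aux
open MvPolynomial Paper
noncomputable section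

section resol
variable {k : Type} [Field k] {σ ι : Type}

lemma exists_step [Finite σ] [Finite ι] (w : ι → ℤ)
    (K : Submodule (MvPolynomial σ k) (ι →₀ MvPolynomial σ k))
    (hK : ∀ f ∈ K, ∀ D, comp w D f ∈ K) :
    ∃ (β : ℤ → ℕ) (_ : (Function.support β).Finite)
      (d : (((j : ℤ) × Fin (β j)) →₀ MvPolynomial σ k) →ₗ[MvPolynomial σ k]
        (ι →₀ MvPolynomial σ k)),
      LinearMap.range d = K ∧
      (∀ x y, HomogOfDeg k (d (Finsupp.single x 1) y) (x.1 + 1 - w y)) ∧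
      ∀ f, d f = 0 → ∀ x, constantCoeff (f x) = 0 := by
  classical
  let H : Set (ι →₀ MvPolynomial σ k) := {f | f ∈ K ∧ ∃ D, HF w D f}
  have hH : Submodule.span (MvPolynomial σ k) H = K := by
    apply le_antisymm
    · rw [Submodule.span_le]; intro f hf; exact hf.1
    · intro f hf
      have h1 := mem_span_comp w f
      have h2 : Submodule.span k (Set.range fun D => comp w D f) ≤
          (Submodule.span (MvPolynomial σ k) H).restrictScalars k := by
        rw [Submodule.span_le]
        rintro _ ⟨D, rfl⟩
        exact Submodule.subset_span ⟨hK f hf D, D, HF_comp w D f⟩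
      exact h2 h1
  have hfg : (Submodule.span (MvPolynomial σ k) H).FG := by
    exact IsNoetherian.noetherian _
  let 𝒯 : Set (Finset (ι →₀ MvPolynomial σ k)) :=
    {T | (T : Set _) ⊆ H ∧ Submodule.span (MvPolynomial σ k) (T : Set _) = K}
  have hne : 𝒯.Nonempty := by
    obtain ⟨T, hT, hs⟩ := (Submodule.fg_span_iff_fg_span_finset_subset H).1 hfg
    exact ⟨T, hT, by rw [← hs, hH]⟩
  obtain ⟨T, ⟨hTH, hTK⟩, hmin⟩ := (measure Finset.card).wf.has_min 𝒯 hne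
  have hdeg : ∀ t : T, ∃ D, HF w (D + 1) (t : ι →₀ MvPolynomial σ k) := by
    intro t
    obtain ⟨D, hD⟩ := (hTH t.2).2
    exact ⟨D - 1, by simpa using hD⟩
  choose δ hδ using hdeg
  let β : ℤ → ℕ := fun j => Nat.card {t : T // δ t = j}
  let E : ((j : ℤ) × Fin (β j)) ≃ T :=
    (Equiv.sigmaCongrRight fun j => (Finite.equivFin {t : T // δ t = j}).symm).trans
      (Equiv.sigmaFiberEquiv δ)
  have hE : ∀ x, δ (E x) = x.1 := by
    rintro ⟨j, s⟩
    exact ((Finite.equivFin {t : T // δ t = j}).symm s).2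
  let d : (((j : ℤ) × Fin (β j)) →₀ MvPolynomial σ k) →ₗ[MvPolynomial σ k]
        (ι →₀ MvPolynomial σ k) :=
    Finsupp.linearCombination (MvPolynomial σ k) (fun x => (E x : ι →₀ MvPolynomial σ k))
  have hd1 : ∀ x, d (Finsupp.single x 1) = (E x : ι →₀ MvPolynomial σ k) := by
    intro x; simp [d]
  have hgr : ∀ x y, HomogOfDeg k (d (Finsupp.single x 1) y) (x.1 + 1 - w y) := by
    intro x y
    rw [hd1, ← hE x]
    exact hδ (E x) y
  refine ⟨β, ?_, d, ?_, hgr, ?_⟩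
  · apply (Set.finite_range δ).subset
    intro j hj
    have : Nat.card {t : T // δ t = j} ≠ 0 := hj
    have := (Nat.card_ne_zero.1 this).1
    obtain ⟨t, ht⟩ := this
    exact ⟨t, ht⟩
  · rw [Finsupp.range_linearCombination, ← hTK]
    congr 1
    ext t
    constructor
    · rintro ⟨x, rfl⟩; exact (E x).2
    · intro ht; exact ⟨E.symm ⟨t, ht⟩, by simp⟩
  · intro f hf x0
    by_contra hc0
    set c := constantCoeff (f x0) with hc
    have hg := comp_comm (w := fun x : ((j : ℤ) × Fin (β j)) => x.1 + 1) (w' := w) d hgr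
      (x0.1 + 1) f
    rw [hf, map_zero] at hg
    set g := comp (fun x : ((j : ℤ) × Fin (β j)) => x.1 + 1) (x0.1 + 1) f with hgdef
    have hgx : g x0 = C c := by
      rw [hgdef, comp_apply]; simp [hc_zero_eq, hc]
    have hsplit : d (Finsupp.single x0 (C c)) + d (Finsupp.erase x0 g) = 0 := by
      rw [← map_add, ← hgx, Finsupp.single_add_erase, hg]
    have hds : d (Finsupp.single x0 (C c)) = (C c : MvPolynomial σ k) • (E x0 : ι →₀ MvPolynomial σ k) := by
      simp [d]
    have hmem : d (Finsupp.erase x0 g) ∈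
        Submodule.span (MvPolynomial σ k) ((T.erase (E x0) : Finset _) : Set (ι →₀ MvPolynomial σ k)) := by
      simp only [d, Finsupp.linearCombination_apply]
      apply Submodule.sum_mem
      intro x hx
      apply Submodule.smul_mem
      apply Submodule.subset_span
      have hxx : x ≠ x0 := by
        rintro rfl; simp at hx
      simp only [Finset.coe_erase, Set.mem_sdiff, Set.mem_singleton_iff]
      refine ⟨(E x).2, fun h => hxx (E.injective (Subtype.ext h))⟩
    have hEx : (E x0 : ι →₀ MvPolynomial σ k) ∈
        Submodule.span (MvPolynomial σ k) ((T.erase (E x0) : Finset _) : Set (ι →₀ MvPolynomial σ k)) := by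
      have : (E x0 : ι →₀ MvPolynomial σ k) = (C c⁻¹ : MvPolynomial σ k) • (-d (Finsupp.erase x0 g)) := by
        rw [eq_neg_of_add_eq_zero_left hsplit |>.symm, hds, smul_smul, ← C_mul,
          inv_mul_cancel₀ hc0, C_1, one_smul]
      have h5 := Submodule.smul_mem _ (C c⁻¹ : MvPolynomial σ k) (Submodule.neg_mem _ hmem)
      rwa [← this] at h5
    refine hmin (T.erase (E x0)) ⟨?_, ?_⟩ ?_
    · exact fun t ht => hTH (Finset.erase_subset _ _ ht)
    · rw [← hTK]
      apply le_antisymm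
      · exact Submodule.span_mono (by simp)
      · rw [Submodule.span_le]
        intro t ht
        by_cases h : t = E x0
        · rw [h]; exact hEx
        · exact Submodule.subset_span (by simp [h]; simpa using ht)
    · exact Finset.card_erase_lt_of_mem (E x0).2

/-- stage of the construction of a minimal resolution -/
structure St (k : Type) [Field k] (σ : Type) where
  β : ℤ → ℕ
  fin : (Function.support β).Finite
  K : Submodule (MvPolynomial σ k) (((j : ℤ) × Fin (β j)) →₀ MvPolynomial σ k)
  gr : ∀ f ∈ K, ∀ D, comp (fun x : (j : ℤ) × Fin (β j) => x.1) D f ∈ K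
  min : ∀ f ∈ K, ∀ x, constantCoeff (f x) = 0

lemma finite_sigma (β : ℤ → ℕ) (h : (Function.support β).Finite) :
    Finite ((j : ℤ) × Fin (β j)) := by
  have := h.to_subtype
  let g : ((j : ℤ) × Fin (β j)) → ((j : Function.support β) × Fin (β j)) :=
    fun x => ⟨⟨x.1, fun h0 => by have := x.2.2; omega⟩, x.2⟩
  apply Finite.of_injective g
  rintro ⟨a, b⟩ ⟨a', b'⟩ hh
  simp only [g, Sigma.mk.injEq] at hh
  obtain ⟨h1, h2⟩ := hh
  obtain rfl := congrArg Subtype.val h1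
  simpa using h2

lemma St.next [Finite σ] (s : St k σ) :
    ∃ (t : St k σ) (d : (((j : ℤ) × Fin (t.β j)) →₀ MvPolynomial σ k) →ₗ[MvPolynomial σ k]
        (((j : ℤ) × Fin (s.β j)) →₀ MvPolynomial σ k)),
      LinearMap.range d = s.K ∧ LinearMap.ker d = t.K ∧
      (∀ x y, HomogOfDeg k (d (Finsupp.single x 1) y) (x.1 + 1 - y.1)) := by
  have := finite_sigma s.β s.fin
  obtain ⟨β, fin, d, hr, hg, hm⟩ := exists_step (fun x : (j : ℤ) × Fin (s.β j) => x.1) s.K s.gr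
  refine ⟨⟨β, fin, LinearMap.ker d, ?_, fun f hf => hm f hf⟩, d, hr, rfl, hg⟩
  intro f hf D
  rw [LinearMap.mem_ker] at hf ⊢
  have h1 := comp_comm (w := fun x : ((j : ℤ) × Fin (β j)) => x.1 + 1)
    (w' := fun x : (j : ℤ) × Fin (s.β j) => x.1) d hg (D + 1) f
  rw [hf, map_zero] at h1
  have h2 : comp (fun x : ((j : ℤ) × Fin (β j)) => x.1 + 1) (D + 1) f =
      comp (fun x : ((j : ℤ) × Fin (β j)) => x.1) D f := by
    ext1 x; rw [comp_apply, comp_apply]; congr 2; ring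
  rwa [h2] at h1

lemma constCoeff_of_mem {N : ℕ} {I : Ideal (MvPolynomial (Fin N) k)}
    (hI : IdealHomog k I) (hp : I ≠ ⊤) {f : MvPolynomial (Fin N) k} (hf : f ∈ I) :
    constantCoeff f = 0 := by
  by_contra h
  apply hp
  have h1 := hI f hf 0
  rw [homogeneousComponent_zero, ← constantCoeff_eq] at h1
  rw [Ideal.eq_top_iff_one]
  have := I.mul_mem_left (C (constantCoeff f)⁻¹) h1
  rwa [← C_mul, inv_mul_cancel₀ h, C_1] at this

lemma smul_mk {A : Type} [CommRing A] (I : Ideal A) (p q : A) :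
    p • (Ideal.Quotient.mk I q) = Ideal.Quotient.mk I (p * q) := rfl

lemma exists_res {N : ℕ} (I : Ideal (MvPolynomial (Fin N) k))
    (hI : IdealHomog k I) (hp : I ≠ ⊤) :
    Nonempty (MinGradedFreeRes k (Fin N) (MvPolynomial (Fin N) k ⧸ I) (quotDeg k I)) := by
  classical
  let β0 : ℤ → ℕ := fun j => if j = 0 then 1 else 0
  let u : (j : ℤ) × Fin (β0 j) := ⟨0, ⟨0, by simp [β0]⟩⟩
  have hu : ∀ x, x = u := by
    rintro ⟨j, s⟩
    have hj : j = 0 := by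
      by_contra h
      have := s.2
      simp [β0, h] at this
    subst hj
    have : s = ⟨0, by simp [β0]⟩ := by
      ext; have := s.2; simp only [β0, if_true] at this; simp only; omega
    rw [this]
  let ε : (((j : ℤ) × Fin (β0 j)) →₀ MvPolynomial (Fin N) k) →ₗ[MvPolynomial (Fin N) k]
      (MvPolynomial (Fin N) k ⧸ I) :=
    Finsupp.linearCombination (MvPolynomial (Fin N) k) (fun _ => Ideal.Quotient.mk I 1)
  have hε : ∀ f, ε f = Ideal.Quotient.mk I (f u) := by
    intro f
    have : f = Finsupp.single u (f u) := by
      ext1 x; rw [hu x]; simp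
    conv_lhs => rw [this]
    simp only [ε, Finsupp.linearCombination_single]
    rw [smul_mk, mul_one]
  let s0 : St k (Fin N) := ⟨β0, by
      apply (Set.finite_singleton (0 : ℤ)).subset
      intro j hj; by_contra h; simp at h; simp [β0, h] at hj,
    LinearMap.ker ε, by
      intro f hf D
      rw [LinearMap.mem_ker, hε, Ideal.Quotient.eq_zero_iff_mem] at hf ⊢
      rw [comp_apply]
      rcases lt_or_ge (D - u.1) 0 with h | h
      · rw [hc_neg h]; exact I.zero_mem
      · obtain ⟨m, hm⟩ := Int.eq_ofNat_of_zero_le h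
        rw [hm, hc_nat]; exact hI _ hf m, by
      intro f hf x
      rw [LinearMap.mem_ker, hε, Ideal.Quotient.eq_zero_iff_mem] at hf
      rw [hu x]
      exact constCoeff_of_mem hI hp hf⟩
  choose nx dd h1 h2 h3 using fun s : St k (Fin N) => s.next
  let st : ℕ → St k (Fin N) := fun i => Nat.rec s0 (fun _ s => nx s) i
  have hmem : ∀ (i : ℕ) f, dd (st i) f ∈ (st i).K := by
    intro i f; rw [← h1]; exact ⟨f, rfl⟩
  exact ⟨{
    β := fun i => (st i).β
    rowFinite := fun i => (st i).fin
    d := fun i => dd (st i)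
    ε := ε
    graded := fun i j j' s s' => h3 (st i) ⟨j, s⟩ ⟨j', s'⟩
    minimal := by
      intro i j j' s s' hj
      have hc0 := (st i).min _ (hmem i (Finsupp.single ⟨j, s⟩ 1)) ⟨j', s'⟩
      have hh := h3 (st i) ⟨j, s⟩ ⟨j', s'⟩
      have h0 : (j + 1 - j' : ℤ) = 0 := by omega
      simp only [h0] at hh
      have := hc_of_homog hh
      rw [hc_zero_eq, hc0] at this
      rw [← this]; simp
    eps_graded := by
      intro j s
      obtain ⟨rfl, -⟩ := Sigma.mk.inj_iff.1 (hu ⟨j, s⟩)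
      have hs : (⟨0, s⟩ : (j : ℤ) × Fin (β0 j)) = u := hu (⟨0, s⟩ : (j : ℤ) × Fin (β0 j))
      have e1 := hε (Finsupp.single u 1)
      rw [← hs, Finsupp.single_eq_same] at e1
      refine Eq.mpr (congrArg (· ∈ quotDeg k I 0) e1) ?_
      simp only [quotDeg]
      refine ⟨1, ?_, ?_⟩
      · exact (mem_homogeneousSubmodule 0 1).2 (isHomogeneous_one (Fin N) k)
      · simp
    eps_surj := by
      intro y
      obtain ⟨p, rfl⟩ := Ideal.Quotient.mk_surjective y
      exact ⟨Finsupp.single u p, by rw [hε]; simp⟩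
    exact0 := by
      rw [LinearMap.exact_iff]
      exact (h1 s0).symm
    exactSeq := by
      intro i
      rw [LinearMap.exact_iff]
      rw [h2 (st i)]
      exact (h1 (st (i + 1))).symm }⟩

end resol
end
end Aux

namespace Aux
open MvPolynomial Paper
noncomputable section

/-- `x` is a nonzerodivisor modulo `J` -/
def Reg {A : Type} [CommRing A] (J : Ideal A) (x : A) : Prop := ∀ f, x * f ∈ J → f ∈ J

section lin
variable {k : Type} [Field k] {N : ℕ}

/-- elements of the free module with all coordinates in `J` -/
def Fmem {A ι : Type} [CommRing A] (J : Ideal A) (f : ι →₀ A) : Prop := ∀ x, f x ∈ J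

section Fm
variable {A ι ι' : Type} [CommRing A] {J : Ideal A}

lemma Fmem.add {f g : ι →₀ A} (hf : Fmem J f) (hg : Fmem J g) : Fmem J (f + g) :=
  fun x => J.add_mem (hf x) (hg x)
lemma Fmem.sub {f g : ι →₀ A} (hf : Fmem J f) (hg : Fmem J g) : Fmem J (f - g) :=
  fun x => J.sub_mem (hf x) (hg x)
lemma Fmem.smul {f : ι →₀ A} (a : A) (hf : Fmem J f) : Fmem J (a • f) :=
  fun x => J.mul_mem_left a (hf x)
lemma Fmem.mono {f : ι →₀ A} {J' : Ideal A} (h : J ≤ J') (hf : Fmem J f) : Fmem J' f :=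
  fun x => h (hf x)
lemma Fmem.zero : Fmem J (0 : ι →₀ A) := fun _ => J.zero_mem
lemma Fmem.map {f : ι →₀ A} (d : (ι →₀ A) →ₗ[A] (ι' →₀ A)) (hf : Fmem J f) : Fmem J (d f) := by
  classical
  intro y
  have : f = f.sum fun x a => a • Finsupp.single x 1 := by simp
  rw [this, map_finsuppSum]
  rw [Finsupp.sum_apply]
  refine Submodule.sum_mem _ fun x _ => ?_
  simp only [map_smul, Finsupp.smul_apply, smul_eq_mul]
  exact J.mul_mem_right _ (hf x)
lemma Fmem.of_smul {f : ι →₀ A} (hf : f ∈ J • (⊤ : Submodule A (ι →₀ A))) : Fmem J f := by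
  refine Submodule.smul_induction_on hf ?_ ?_
  · intro a ha g _ x; exact J.mul_mem_right _ ha
  · intro a b ha hb; exact ha.add hb
lemma Fmem.smul_ideal {f : ι →₀ A} {x : A} : Fmem (J ⊔ Ideal.span {x}) (x • f) :=
  fun y => (le_sup_right : _ ≤ J ⊔ Ideal.span {x})
    (Ideal.mul_mem_right _ _ (Ideal.mem_span_singleton_self x))

lemma Fmem_bot {f : ι →₀ A} : Fmem (⊥ : Ideal A) f ↔ f = 0 := by
  constructor
  · intro h; ext1 x; exact h x
  · rintro rfl; exact Fmem.zero

lemma exists_sub_of_mem_sup {x p : A} (h : p ∈ J ⊔ Ideal.span {x}) : ∃ q, p - x * q ∈ J := by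
  obtain ⟨a, ha, b, hb, rfl⟩ := Submodule.mem_sup.1 h
  obtain ⟨c, rfl⟩ := Ideal.mem_span_singleton'.1 hb
  exact ⟨c, by simpa [mul_comm] using ha⟩

lemma Fmem.exists_sub {f : ι →₀ A} {x : A} (h : Fmem (J ⊔ Ideal.span {x}) f) :
    ∃ b : ι →₀ A, Fmem J (f - x • b) := by
  classical
  choose q hq using fun y => exists_sub_of_mem_sup (h y)
  refine ⟨Finsupp.onFinset f.support (fun y => if f y = 0 then 0 else q y) (by
    intro y hy; simp at hy; simp [hy.1]), fun y => ?_⟩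
  simp only [Finsupp.sub_apply, Finsupp.smul_apply, Finsupp.onFinset_apply, smul_eq_mul]
  split_ifs with h0
  · simp [h0]
  · exact hq y

lemma mk_mem_smul_top {I J : Ideal A} {f : A} :
    Ideal.Quotient.mk I f ∈ J • (⊤ : Submodule A (A ⧸ I)) ↔ f ∈ I ⊔ J := by
  have h1 : J • (⊤ : Submodule A (A ⧸ I)) = Submodule.map (Submodule.mkQ I) J := by
    have := Submodule.map_smul'' J (⊤ : Submodule A A) (Submodule.mkQ I)
    rw [Submodule.map_top, Submodule.range_mkQ] at this
    rw [← this]; simp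
  rw [h1]
  have h2 : Ideal.Quotient.mk I f = Submodule.mkQ I f := rfl
  rw [h2, ← Submodule.mem_comap, Submodule.comap_map_mkQ]

lemma Reg.Fmem {x : A} (hx : Reg J x) {f : ι →₀ A} (h : Fmem J (x • f)) : Fmem J f :=
  fun y => hx _ (h y)
end Fm

variable {I : Ideal (MvPolynomial (Fin N) k)}
  (res : MinGradedFreeRes k (Fin N) (MvPolynomial (Fin N) k ⧸ I) (quotDeg k I))

lemma res_eps (J : Ideal (MvPolynomial (Fin N) k)) (c)
    (h : res.ε c ∈ J • (⊤ : Submodule (MvPolynomial (Fin N) k) (MvPolynomial (Fin N) k ⧸ I))) :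
    ∃ c', Fmem J (c - res.d 0 c') := by
  have h1 := Submodule.map_smul'' J (⊤ : Submodule (MvPolynomial (Fin N) k) _) res.ε
  rw [Submodule.map_top, LinearMap.range_eq_top.2 res.eps_surj] at h1
  rw [← h1] at h
  obtain ⟨f, hf, hfc⟩ := h
  obtain ⟨c', hc'⟩ := (res.exact0 (c - f)).1 (by rw [map_sub, hfc, sub_self])
  refine ⟨c', ?_⟩
  rw [hc']; simpa using Fmem.of_smul hf

/-- exactness modulo `J` -/
def PP (J : Ideal (MvPolynomial (Fin N) k)) : Prop :=
  ∀ i c, Fmem J (res.d i c) → ∃ c', Fmem J (c - res.d (i + 1) c')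

lemma PP_bot : PP res ⊥ := by
  intro i c h
  rw [Fmem_bot] at h
  obtain ⟨c', hc'⟩ := (res.exactSeq i c).1 h
  exact ⟨c', by rw [hc', sub_self]; exact Fmem.zero⟩

lemma res_dd (i c) : res.d i (res.d (i + 1) c) = 0 := (res.exactSeq i).apply_apply_eq_zero c
lemma res_ed (c) : res.ε (res.d 0 c) = 0 := res.exact0.apply_apply_eq_zero c

lemma PP_step {J : Ideal (MvPolynomial (Fin N) k)} {x : MvPolynomial (Fin N) k} (hP : PP res J)
    (hx : Reg J x) (hxR : Reg (I ⊔ J) x) : PP res (J ⊔ Ideal.span {x}) := by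
  intro i c h
  obtain ⟨b, hb⟩ := h.exists_sub
  have hb' : ∃ b', Fmem J (b - res.d i b') := by
    cases i with
    | zero =>
      apply res_eps
      obtain ⟨p, hp⟩ := Ideal.Quotient.mk_surjective (res.ε b)
      rw [← hp, mk_mem_smul_top]
      apply hxR
      rw [← mk_mem_smul_top, ← smul_mk, hp, ← map_smul]
      have e1 : x • b = res.d 0 c - (res.d 0 c - x • b) := by abel
      rw [e1, map_sub, res_ed, zero_sub]
      apply Submodule.neg_mem
      have : ∀ f : ((j : ℤ) × Fin (res.β 0 j)) →₀ MvPolynomial (Fin N) k, Fmem J f →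
          res.ε f ∈ J • (⊤ : Submodule (MvPolynomial (Fin N) k) (MvPolynomial (Fin N) k ⧸ I)) := by
        intro f hf
        have : f = f.sum fun x a => a • Finsupp.single x 1 := by simp
        rw [this, map_finsuppSum]
        refine Submodule.sum_mem _ fun y _ => ?_
        simp only [map_smul]
        exact Submodule.smul_mem_smul (hf y) trivial
      exact this _ hb
    | succ i =>
      apply hP
      apply hx.Fmem
      have := hb.map (res.d i)
      rw [map_sub, res_dd, zero_sub, map_smul] at this
      simpa using this.smul (-1)
  obtain ⟨b', hb'⟩ := hb'
  have h2 : Fmem J (res.d i (c - x • b')) := by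
    have : res.d i (c - x • b') = (res.d i c - x • b) + x • (b - res.d i b') := by
      rw [map_sub, map_smul, smul_sub]; abel
    rw [this]
    exact hb.add (hb'.smul x)
  obtain ⟨c', hc'⟩ := hP i _ h2
  refine ⟨c', ?_⟩
  have : c - res.d (i + 1) c' = (c - x • b' - res.d (i + 1) c') + x • b' := by abel
  rw [this]
  exact (hc'.mono le_sup_left).add Fmem.smul_ideal

/-- generator degrees -/
def wt (i : ℕ) : ((j : ℤ) × Fin (res.β i j)) → ℤ := fun x => i + x.1

lemma res_graded (i : ℕ) (x y) :
    HomogOfDeg k (res.d i (Finsupp.single x 1) y) (wt res (i + 1) x - wt res i y) := by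
  have := res.graded i x.1 y.1 x.2 y.2
  convert this using 1
  simp [wt]; ring

/-- exactness modulo `J` in high degrees -/
def TT (r : ℕ) (J : Ideal (MvPolynomial (Fin N) k)) : Prop :=
  (∀ c D, HF (wt res 0) D c → (r : ℤ) < D → ∃ c', Fmem J (c - res.d 0 c')) ∧
  ∀ i c D, HF (wt res (i + 1)) D c → (i + 1 + r : ℤ) < D →
    Fmem J (res.d i c) → ∃ c', Fmem J (c - res.d (i + 1) c')

/-- `J` is stable under homogeneous components -/
def HH {σ : Type} (J : Ideal (MvPolynomial σ k)) : Prop := ∀ p ∈ J, ∀ z, hc z p ∈ J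

lemma Fmem.comp {ι : Type} {J : Ideal (MvPolynomial (Fin N) k)} (hJ : HH J) {w : ι → ℤ} {D : ℤ}
    {f : ι →₀ MvPolynomial (Fin N) k} (hf : Fmem J f) : Fmem J (comp w D f) := by
  intro x; rw [comp_apply]; exact hJ _ (hf x) _

lemma comp_smul_lin {ι : Type} {x : MvPolynomial (Fin N) k} (hx : x.IsHomogeneous 1) (w : ι → ℤ)
    (D : ℤ) (f : ι →₀ MvPolynomial (Fin N) k) : Aux.comp w D (x • f) = x • Aux.comp w (D - 1) f := by
  ext1 y
  simp only [comp_apply, Finsupp.smul_apply, smul_eq_mul]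
  rw [mul_comm, hc_mul_homog (u := 1) (Or.inr ⟨1, rfl, hx⟩), mul_comm]
  congr 3; ring

lemma TT_step {r : ℕ} {J : Ideal (MvPolynomial (Fin N) k)} {x : MvPolynomial (Fin N) k}
    (hJ : HH J) (hx1 : x.IsHomogeneous 1) (hT : TT res r J)
    (hx : Reg J x) : TT res r (J ⊔ Ideal.span {x}) := by
  refine ⟨fun c D hc hD => ?_, ?_⟩
  · obtain ⟨c', h⟩ := hT.1 c D hc hD
    exact ⟨c', h.mono le_sup_left⟩
  intro i c D hcD hD h
  obtain ⟨b0, hb0⟩ := h.exists_sub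
  have hdc : comp (wt res i) D (res.d i c) = res.d i c := by
    rw [← comp_comm (res.d i) (res_graded res i), comp_of_HF hcD]
  obtain ⟨b, hbH, hb⟩ : ∃ b, HF (wt res i) (D - 1) b ∧ Fmem J (res.d i c - x • b) := by
    refine ⟨comp (wt res i) (D - 1) b0, HF_comp _ _ _, ?_⟩
    have := hb0.comp hJ (w := wt res i) (D := D)
    rwa [map_sub, hdc, comp_smul_lin hx1] at this
  have hb' : ∃ b', Fmem J (b - res.d i b') := by
    cases i with
    | zero => exact hT.1 b (D - 1) hbH (by push_cast at hD; omega)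
    | succ i =>
      apply hT.2 i b (D - 1) hbH (by push_cast at hD; omega)
      apply hx.Fmem
      have := hb.map (res.d i)
      rw [map_sub, res_dd, zero_sub, map_smul] at this
      simpa using this.smul (-1)
  obtain ⟨b1, hb1⟩ := hb'
  obtain ⟨b', hbH', hb'⟩ : ∃ b', HF (wt res (i + 1)) (D - 1) b' ∧ Fmem J (b - res.d i b') := by
    refine ⟨comp (wt res (i + 1)) (D - 1) b1, HF_comp _ _ _, ?_⟩
    rw [comp_comm (res.d i) (res_graded res i)]
    have := hb1.comp hJ (w := wt res i) (D := D - 1)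
    rwa [map_sub, comp_of_HF hbH] at this
  have h2 : Fmem J (res.d i (c - x • b')) := by
    have : res.d i (c - x • b') = (res.d i c - x • b) + x • (b - res.d i b') := by
      rw [map_sub, map_smul, smul_sub]; abel
    rw [this]
    exact hb.add (hb'.smul x)
  obtain ⟨c', hc'⟩ := hT.2 i (c - x • b') D (by
    rw [HF_iff, map_sub, comp_smul_lin hx1, comp_of_HF hcD, comp_of_HF hbH']) hD h2
  refine ⟨c', ?_⟩
  have : c - res.d (i + 1) c' = (c - x • b' - res.d (i + 1) c') + x • b' := by abel
  rw [this]
  exact (hc'.mono le_sup_left).add Fmem.smul_ideal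

lemma TT_of_PP {r : ℕ} {J : Ideal (MvPolynomial (Fin N) k)} (hP : PP res J)
    (hred : ∀ d, r < d → ∀ p : MvPolynomial (Fin N) k, p.IsHomogeneous d → p ∈ I ⊔ J) :
    TT res r J := by
  refine ⟨fun c D hc hD => ?_, fun i c D _ _ h => hP i c h⟩
  apply res_eps
  have : c = c.sum fun x a => a • Finsupp.single x 1 := by simp
  rw [this, map_finsuppSum]
  refine Submodule.sum_mem _ fun y _ => ?_
  simp only [map_smul]
  have h1 := res.eps_graded y.1 y.2
  have h2 := hc y
  rcases h2 with h2 | ⟨m, hm, h2⟩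
  · rw [h2, zero_smul]; exact Submodule.zero_mem _
  simp only [quotDeg] at h1
  split_ifs at h1 with h0
  · obtain ⟨q, hq, hq'⟩ := h1
    have e1 : res.ε (Finsupp.single y 1) = Ideal.Quotient.mk I q := hq'.symm
    rw [e1, smul_mk, mk_mem_smul_top]
    apply hred (m + y.1.toNat)
    · simp [wt] at hm
      omega
    · exact h2.mul ((mem_homogeneousSubmodule _ _).1 hq)
  · have e1 : res.ε (Finsupp.single y 1) = 0 := by simpa using h1
    rw [e1, smul_zero]; exact Submodule.zero_mem _

lemma res_const (i c x) : constantCoeff (res.d i c x) = 0 := by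
  classical
  have : c = c.sum fun x a => a • Finsupp.single x 1 := by simp
  rw [this, map_finsuppSum, Finsupp.sum_apply, Finsupp.sum, map_sum]
  refine Finset.sum_eq_zero fun y _ => ?_
  simp only [map_smul, Finsupp.smul_apply, smul_eq_mul, map_mul]
  by_cases h : x.1 = y.1 + 1
  · have := res.minimal i y.1 x.1 y.2 x.2 h
    rw [show res.d i (Finsupp.single y 1) x = 0 from this]; simp
  · have := res.graded i y.1 x.1 y.2 x.2
    have h2 := hc_of_homog_ne (z := 0) this (by omega)
    rw [hc_zero_eq, C_eq_zero] at h2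
    rw [show constantCoeff (res.d i (Finsupp.single y 1) x) = 0 from h2, mul_zero]

lemma lin_upper {τ : Type} [Fintype τ] [DecidableEq τ] (z : τ → MvPolynomial (Fin N) k)
    (hz : ∀ t, (z t).IsHomogeneous 1) (SL : Finset τ) (r : ℕ)
    (hHH : ∀ s : Finset τ, HH (Ideal.span (z '' (s : Set τ))))
    (hA : ∀ (s : Finset τ) t, t ∉ s → Reg (Ideal.span (z '' (s : Set τ))) (z t))
    (hR : ∀ (s : Finset τ) t, s ⊆ SL → t ∈ SL → t ∉ s → Reg (I ⊔ Ideal.span (z '' (s : Set τ))) (z t))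
    (hm : ∀ p : MvPolynomial (Fin N) k, constantCoeff p = 0 ↔
      p ∈ Ideal.span (z '' ((Finset.univ : Finset τ) : Set τ)))
    (hred : ∀ d, r < d → ∀ p : MvPolynomial (Fin N) k, p.IsHomogeneous d →
      p ∈ I ⊔ Ideal.span (z '' (SL : Set τ))) (i : ℕ) (j : ℤ) (h : res.β i j ≠ 0) : j ≤ r := by
  classical
  have hins : ∀ (s : Finset τ) t, Ideal.span (z '' ((insert t s : Finset τ) : Set τ)) =
      Ideal.span (z '' (s : Set τ)) ⊔ Ideal.span {z t} := by
    intro s t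
    rw [Finset.coe_insert, Set.image_insert_eq, Ideal.span_insert, sup_comm]
  have hP : ∀ s : Finset τ, s ⊆ SL → PP res (Ideal.span (z '' (s : Set τ))) := by
    intro s
    induction s using Finset.induction_on with
    | empty => intro _; simpa using PP_bot res
    | insert t s hts ih =>
      intro hs
      rw [hins]
      have hs' : s ⊆ SL := (Finset.subset_insert t s).trans hs
      exact PP_step res (ih hs') (hA s t hts) (hR s t hs' (hs (Finset.mem_insert_self t s)) hts)
  have hT : ∀ s : Finset τ, TT res r (Ideal.span (z '' ((SL ∪ s : Finset τ) : Set τ))) := by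
    intro s
    induction s using Finset.induction_on with
    | empty =>
      rw [Finset.union_empty]
      exact TT_of_PP res (hP SL subset_rfl) hred
    | insert t s hts ih =>
      by_cases ht : t ∈ SL ∪ s
      · rw [Finset.union_insert, Finset.insert_eq_of_mem ht]; exact ih
      · rw [Finset.union_insert, hins]
        exact TT_step res (hHH _) (hz t) ih (hA _ t ht)
  have hTm := hT Finset.univ
  rw [Finset.union_eq_right.2 (Finset.subset_univ SL)] at hTm
  by_contra hj
  push Not at hj
  let x : (j : ℤ) × Fin (res.β i j) := ⟨j, ⟨0, Nat.pos_of_ne_zero h⟩⟩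
  have hHF : HF (wt res i) (i + j) (Finsupp.single x (1 : MvPolynomial (Fin N) k)) := by
    intro y
    by_cases hxy : x = y
    · subst hxy
      right; exact ⟨0, by simp [wt, x], by simpa using isHomogeneous_one (Fin N) k⟩
    · left; simp [hxy]
  have : ∃ c', Fmem (Ideal.span (z '' ((Finset.univ : Finset τ) : Set τ)))
      (Finsupp.single x (1 : MvPolynomial (Fin N) k) - res.d i c') := by
    cases i with
    | zero => exact hTm.1 _ _ hHF (by simpa using hj)
    | succ i =>
      apply hTm.2 i _ _ hHF (by push_cast; omega)
      intro y
      rw [← hm]; exact res_const res i _ y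
  obtain ⟨c', hc'⟩ := this
  have := (hm _).2 (hc' x)
  simp [res_const] at this

end lin
end
end Aux

namespace Aux
open MvPolynomial Paper
noncomputable section

section low
variable {k : Type} [Field k] {N : ℕ} {I : Ideal (MvPolynomial (Fin N) k)}
  (res : MinGradedFreeRes k (Fin N) (MvPolynomial (Fin N) k ⧸ I) (quotDeg k I))

lemma ker_eps_const (c) (h : res.ε c = 0) (x) : constantCoeff (c x) = 0 := by
  obtain ⟨c', rfl⟩ := (res.exact0 c).1 h
  exact res_const res 0 c' x

lemma ker_d_const (i c) (h : res.d i c = 0) (x) : constantCoeff (c x) = 0 := by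
  obtain ⟨c', rfl⟩ := (res.exactSeq i c).1 h
  exact res_const res (i + 1) c' x

lemma eps_gen_ne (x) : res.ε (Finsupp.single x 1) ≠ 0 := by
  intro h
  have := ker_eps_const res _ h x
  simp at this

lemma d_gen_ne (i x) : res.d i (Finsupp.single x 1) ≠ 0 := by
  intro h
  have := ker_d_const res i _ h x
  simp at this

lemma eps_gen (x : (j : ℤ) × Fin (res.β 0 j)) : ∃ (m : ℕ) (a : MvPolynomial (Fin N) k),
    x.1 = m ∧ a.IsHomogeneous m ∧ res.ε (Finsupp.single x 1) = Ideal.Quotient.mk I a := by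
  have h := res.eps_graded x.1 x.2
  have hne := eps_gen_ne res x
  unfold quotDeg at h
  split_ifs at h with h0
  · obtain ⟨a, ha, hae⟩ := h
    refine ⟨x.1.toNat, a, by omega, by simpa using ha, ?_⟩
    rw [← hae]
    simp
  · exact absurd (by simpa using h) hne

lemma beta_zero (x : (j : ℤ) × Fin (res.β 0 j)) : x.1 = 0 := by
  obtain ⟨m, a, hm, ha, hae⟩ := eps_gen res x
  rcases Nat.eq_zero_or_pos m with h | h
  · omega
  exfalso
  obtain ⟨u, hu⟩ := res.eps_surj (Ideal.Quotient.mk I 1)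
  have h1 : res.ε (Finsupp.single x 1 - a • u) = 0 := by
    rw [map_sub, map_smul, hae, hu, smul_mk, mul_one, sub_self]
  have h2 := ker_eps_const res _ h1 x
  have h3 : constantCoeff a = 0 := by
    have := hc_of_homog_ne (z := 0) (Or.inr ⟨m, rfl, ha⟩ : HomogOfDeg k a m) (by omega)
    rwa [hc_zero_eq, C_eq_zero] at this
  simp [h3] at h2

lemma eps_gen' (x : (j : ℤ) × Fin (res.β 0 j)) : ∃ c : k, c ≠ 0 ∧
    res.ε (Finsupp.single x 1) = Ideal.Quotient.mk I (C c) := by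
  obtain ⟨m, a, hm, ha, hae⟩ := eps_gen res x
  have h0 := beta_zero res x
  have hm0 : m = 0 := by omega
  subst hm0
  have : a = C (constantCoeff a) := by
    rw [← hc_zero_eq]
    exact (hc_of_homog (Or.inr ⟨0, rfl, ha⟩)).symm
  refine ⟨constantCoeff a, ?_, by rw [← this]; exact hae⟩
  intro h
  apply eps_gen_ne res x
  rw [hae, this, h]; simp

lemma beta_sub (x y : (j : ℤ) × Fin (res.β 0 j)) : x = y := by
  classical
  obtain ⟨a, ha, hx⟩ := eps_gen' res x
  obtain ⟨b, hb, hy⟩ := eps_gen' res y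
  by_contra hxy
  have h1 : res.ε ((C b : MvPolynomial (Fin N) k) • Finsupp.single x 1 -
      (C a : MvPolynomial (Fin N) k) • Finsupp.single y 1) = 0 := by
    rw [map_sub, map_smul, map_smul, hx, hy, smul_mk, smul_mk, mul_comm, sub_self]
  have h2 := ker_eps_const res _ h1 x
  simp [Ne.symm hxy] at h2
  exact hb h2

lemma beta_one {r : ℕ} (hlow : ∀ f ∈ I, ∀ d ≤ r, f.IsHomogeneous d → f = 0)
    (x : (j : ℤ) × Fin (res.β 1 j)) : (r : ℤ) ≤ x.1 := by
  classical
  have hne := d_gen_ne res 0 x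
  obtain ⟨y, hy⟩ := Finsupp.ne_iff.1 hne
  obtain ⟨a, ha, hay⟩ := eps_gen' res y
  set g := res.d 0 (Finsupp.single x 1) y with hg
  have h1 : res.d 0 (Finsupp.single x 1) = g • Finsupp.single y 1 := by
    ext1 y'
    rw [beta_sub res y' y]
    simp [hg]
  have h2 := res_ed res (Finsupp.single x 1)
  rw [h1, map_smul, hay, smul_mk, Ideal.Quotient.eq_zero_iff_mem] at h2
  have h3 : g ∈ I := by
    have := I.mul_mem_right (C a⁻¹) h2
    rwa [mul_assoc, ← C_mul, mul_inv_cancel₀ ha, C_1, mul_one] at this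
  have h4 : HomogOfDeg k g (x.1 + 1 - y.1) := res.graded 0 x.1 y.1 x.2 y.2
  rw [beta_zero res y] at h4
  rcases h4 with h4 | ⟨m, hm, h4⟩
  · exact absurd h4 hy
  by_contra hlt
  exact hy (hlow g h3 m (by omega) h4)

lemma beta_low {r : ℕ} (hlow : ∀ f ∈ I, ∀ d ≤ r, f.IsHomogeneous d → f = 0) (i : ℕ)
    (x : (j : ℤ) × Fin (res.β (i + 1) j)) : (r : ℤ) ≤ x.1 := by
  classical
  induction i with
  | zero => exact beta_one res hlow x
  | succ i ih =>
    have hne := d_gen_ne res (i + 1) x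
    obtain ⟨y, hy⟩ := Finsupp.ne_iff.1 hne
    have h1 := ih y
    have h4 : HomogOfDeg k _ (x.1 + 1 - y.1) := res.graded (i + 1) x.1 y.1 x.2 y.2
    have h5 := res_const res (i + 1) (Finsupp.single x 1) y
    rcases h4 with h4 | ⟨m, hm, h4⟩
    · exact absurd h4 hy
    have : m ≠ 0 := by
      rintro rfl
      apply hy
      have h6 := hc_of_homog (Or.inr ⟨0, rfl, h4⟩)
      have h7 := hc_zero_eq (res.d (i + 1) (Finsupp.single x 1) y)
      rw [h5] at h7
      simp only [map_zero] at h7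
      exact h6.symm.trans h7
    omega

lemma linear_of_bounds {r : ℕ} (hlow : ∀ f ∈ I, ∀ d ≤ r, f.IsHomogeneous d → f = 0)
    (hup : ∀ i j, res.β i j ≠ 0 → j ≤ (r : ℤ)) (i : ℕ) (j : ℤ) (h : res.β i j ≠ 0) :
    (i = 0 ∧ j = 0) ∨ (1 ≤ i ∧ j = (r : ℤ)) := by
  cases i with
  | zero =>
    left
    exact ⟨rfl, beta_zero res ⟨j, ⟨0, Nat.pos_of_ne_zero h⟩⟩⟩
  | succ i =>
    right
    exact ⟨by omega, le_antisymm (hup _ _ h) (beta_low res hlow i ⟨j, ⟨0, Nat.pos_of_ne_zero h⟩⟩)⟩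

lemma low_of_linear (hI : IdealHomog k I) (hp : I ≠ ⊤) {r : ℕ}
    (hlin : ∀ i j, res.β i j ≠ 0 → (i = 0 ∧ j = 0) ∨ (1 ≤ i ∧ j = (r : ℤ))) :
    ∀ f ∈ I, ∀ d ≤ r, f.IsHomogeneous d → f = 0 := by
  classical
  intro f hf d hd hfd
  obtain ⟨u, hu⟩ := res.eps_surj (Ideal.Quotient.mk I 1)
  have h1 : res.ε (f • u) = 0 := by
    rw [map_smul, hu, smul_mk, mul_one, Ideal.Quotient.eq_zero_iff_mem]; exact hf
  obtain ⟨c, hc'⟩ := (res.exact0 _).1 h1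
  have h2 : ∀ y, hc (d : ℤ) (res.d 0 c y) = 0 := by
    intro y
    have : c = c.sum fun x a => a • Finsupp.single x 1 := by simp
    rw [this, map_finsuppSum, Finsupp.sum_apply, Finsupp.sum, map_sum]
    refine Finset.sum_eq_zero fun x _ => ?_
    simp only [map_smul, Finsupp.smul_apply, smul_eq_mul]
    rw [hc_mul_homog (res.graded 0 x.1 y.1 x.2 y.2), hc_neg, zero_mul]
    rw [beta_zero res y]
    have h3 : res.β 1 x.1 ≠ 0 := by
      exact Nat.ne_of_gt x.2.pos
    rcases hlin _ _ h3 with h | h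
    · omega
    · omega
  by_contra hne
  have h3 : ∀ y, constantCoeff (u y) = 0 := by
    intro y
    have h4 := h2 y
    rw [hc', Finsupp.smul_apply, smul_eq_mul, mul_comm, hc_mul_homog (Or.inr ⟨d, rfl, hfd⟩),
      sub_self, hc_zero_eq] at h4
    rcases mul_eq_zero.1 h4 with h | h
    · simpa using h
    · exact absurd h hne
  choose a ha using fun y => Ideal.Quotient.mk_surjective (I := I) (res.ε (Finsupp.single y 1))
  have h5 : res.ε u = Ideal.Quotient.mk I (u.sum fun y p => p * a y) := by
    have : u = u.sum fun x a => a • Finsupp.single x 1 := by simp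
    conv_lhs => rw [this]
    rw [map_finsuppSum, Finsupp.sum, Finsupp.sum, map_sum]
    refine Finset.sum_congr rfl fun y _ => ?_
    rw [map_smul, ← ha, smul_mk]
  rw [hu, Ideal.Quotient.eq] at h5
  have h6 := constCoeff_of_mem hI hp h5
  rw [map_sub, Finsupp.sum, map_sum] at h6
  simp [h3] at h6

end low
end
end Aux

namespace Aux
open MvPolynomial Paper
noncomputable section

section coord
variable {k : Type} [Field k]

lemma exists_big {M : Type*} [AddCommGroup M] [Module k M] [Module.Finite k M] (a : ℕ)
    (ha : a ≤ Module.finrank k M) (c : ℕ) (V : Submodule k M) (hV : Module.finrank k V + c = a) :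
    ∃ V' : Submodule k M, V ≤ V' ∧ Module.finrank k V' = a := by
  induction c generalizing V with
  | zero => exact ⟨V, le_rfl, by omega⟩
  | succ c ih =>
    have hne : V ≠ ⊤ := by
      rintro rfl
      rw [finrank_top] at hV; omega
    obtain ⟨x, -, hx⟩ := SetLike.exists_of_lt (lt_top_iff_ne_top.2 hne)
    have h1 : V < V ⊔ Submodule.span k {x} := by
      refine lt_of_le_of_ne le_sup_left fun h => hx ?_
      rw [h]; exact Submodule.mem_sup_right (Submodule.mem_span_singleton_self x)
    have h2 := Submodule.finrank_lt_finrank_of_lt h1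
    have h3 := Submodule.finrank_add_le_finrank_add_finrank V (Submodule.span k {x})
    have h4 := finrank_span_le_card (R := k) ({x} : Set M)
    simp at h4
    obtain ⟨V', h5, h6⟩ := ih (V ⊔ Submodule.span k {x}) (by omega)
    exact ⟨V', le_sup_left.trans h5, h6⟩

lemma exists_basis {M : Type*} [AddCommGroup M] [Module k M] [Module.Finite k M] (a b : ℕ)
    (hM : Module.finrank k M = a + b) (V : Submodule k M) (hV : Module.finrank k V ≤ a) :
    ∃ B : Module.Basis (Fin a ⊕ Fin b) k M,
      V ≤ Submodule.span k (Set.range fun i => B (Sum.inl i)) := by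
  obtain ⟨V', h1, h2⟩ := exists_big a (by omega) (a - Module.finrank k V) V (by omega)
  obtain ⟨W, hW⟩ := V'.exists_isCompl
  have h3 := Submodule.finrank_add_eq_of_isCompl hW
  let B1 := Module.finBasisOfFinrankEq k V' h2
  let B2 := Module.finBasisOfFinrankEq k W (n := b) (by omega)
  refine ⟨(B1.prod B2).map (Submodule.prodEquivOfIsCompl V' W hW), h1.trans ?_⟩
  have : (fun i => ((B1.prod B2).map (Submodule.prodEquivOfIsCompl V' W hW)) (Sum.inl i)) =
      fun i => V'.subtype (B1 i) := by
    ext i; simp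
  rw [this, Set.range_comp', ← Submodule.map_span, Module.Basis.span_eq]
  simp

lemma finite_homog {σ : Type} [Finite σ] (d : ℕ) :
    Module.Finite k (homogeneousSubmodule σ k d) :=
  Module.Finite.iff_fg.2 (homogeneousSubmodule_fg σ k d)

lemma finrank_lin {N : ℕ} : Module.finrank k (homogeneousSubmodule (Fin N) k 1) = N := by
  rw [homogeneousSubmodule_one_eq_span_X, finrank_span_eq_card]
  · simp
  · exact linearIndependent_X (Fin N) k

/-- linear change of coordinates adapted to a subspace of linear forms -/
lemma exists_coord (n e : ℕ) (T : Set (MvPolynomial (Fin (n + e + 1)) k)) (hTf : T.Finite)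
    (hT : ∀ t ∈ T, t.IsHomogeneous 1) (hc : T.ncard ≤ n + 1) :
    ∃ φ : MvPolynomial (Fin (n + 1) ⊕ Fin e) k ≃ₐ[k] MvPolynomial (Fin (n + e + 1)) k,
      (∀ p d, p.IsHomogeneous d → (φ p).IsHomogeneous d) ∧
      (∀ p d, p.IsHomogeneous d → (φ.symm p).IsHomogeneous d) ∧
      ∀ t ∈ T, t ∈ Submodule.span k (Set.range fun i => φ (X (Sum.inl i))) := by
  classical
  let M := homogeneousSubmodule (Fin (n + e + 1)) k 1
  have : Module.Finite k M := finite_homog 1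
  let T' : Set M := {m | (m : MvPolynomial (Fin (n + e + 1)) k) ∈ T}
  have hT' : T'.Finite := hTf.preimage (Subtype.val_injective.injOn)
  have hcard : T'.ncard ≤ T.ncard := by
    exact Set.ncard_le_ncard_of_injOn (fun m : M => (m : MvPolynomial (Fin (n + e + 1)) k))
      (fun m hm => hm) Subtype.val_injective.injOn hTf
  have hV : Module.finrank k (Submodule.span k T') ≤ n + 1 := by
    have := hT'.fintype
    have := finrank_span_le_card (R := k) T'
    rw [← Set.ncard_eq_toFinset_card'] at this
    omega
  obtain ⟨B, hB⟩ := exists_basis (n + 1) e (by rw [finrank_lin]; omega) (Submodule.span k T') hV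
  let θ : M →ₗ[k] MvPolynomial (Fin (n + 1) ⊕ Fin e) k := B.constr k X
  have hXM : ∀ i : Fin (n + e + 1), (X i : MvPolynomial (Fin (n + e + 1)) k) ∈ M :=
    fun i => isHomogeneous_X k i
  let f1 : MvPolynomial (Fin (n + 1) ⊕ Fin e) k →ₐ[k] MvPolynomial (Fin (n + e + 1)) k :=
    aeval fun t => (B t : MvPolynomial (Fin (n + e + 1)) k)
  let f2 : MvPolynomial (Fin (n + e + 1)) k →ₐ[k] MvPolynomial (Fin (n + 1) ⊕ Fin e) k :=
    aeval fun i => θ ⟨X i, hXM i⟩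
  have h1 : ∀ m : M, f1 (θ m) = m := by
    have : f1.toLinearMap ∘ₗ θ = M.subtype := by
      apply B.ext
      intro t
      simp [θ, f1]
    intro m
    exact congrArg (fun g => g m) this
  have h2 : ∀ m : M, f2 m = θ m := by
    rintro ⟨m, hm⟩
    have hm' := hm
    change m ∈ homogeneousSubmodule _ _ _ at hm'
    rw [homogeneousSubmodule_one_eq_span_X] at hm'
    induction hm' using Submodule.span_induction with
    | mem x h => obtain ⟨i, rfl⟩ := h; simp [f2]
    | zero =>
      have : (⟨0, hm⟩ : M) = 0 := rfl
      rw [this]; simp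
    | add x y hx hy ihx ihy =>
      have hx' : x ∈ M := by
        change x ∈ homogeneousSubmodule _ _ _
        rw [homogeneousSubmodule_one_eq_span_X]; exact hx
      have hy' : y ∈ M := by
        change y ∈ homogeneousSubmodule _ _ _
        rw [homogeneousSubmodule_one_eq_span_X]; exact hy
      have : (⟨x + y, hm⟩ : M) = ⟨x, hx'⟩ + ⟨y, hy'⟩ := rfl
      rw [this, map_add, ← ihx hx', ← ihy hy']; simp
    | smul a x hx ihx =>
      have hx' : x ∈ M := by
        change x ∈ homogeneousSubmodule _ _ _
        rw [homogeneousSubmodule_one_eq_span_X]; exact hx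
      have : (⟨a • x, hm⟩ : M) = a • ⟨x, hx'⟩ := rfl
      rw [this, map_smul, ← ihx hx']; simp
  have hθ : ∀ m, (θ m).IsHomogeneous 1 := by
    intro m
    have : θ m = ∑ t, B.repr m t • X t := by simp [θ, Module.Basis.constr_apply_fintype]
    rw [this]
    apply IsHomogeneous.sum
    intro t _
    rw [smul_eq_C_mul]
    exact isHomogeneous_C_mul_X _ _
  let φ := AlgEquiv.ofAlgHom f1 f2 (by
    apply MvPolynomial.algHom_ext
    intro i
    have := h1 ⟨X i, hXM i⟩
    simpa [f2] using this) (by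
    apply MvPolynomial.algHom_ext
    intro t
    have := h2 (B t)
    have h3 : θ (B t) = X t := by simp [θ]
    rw [h3] at this
    simpa [f1] using this)
  have hφX : ∀ t, φ (X t) = (B t : MvPolynomial (Fin (n + e + 1)) k) := by
    intro t; change f1 (X t) = _; simp [f1]
  refine ⟨φ, ?_, ?_, ?_⟩
  · intro p d hp
    have := IsHomogeneous.aeval hp (fun t => (B t : MvPolynomial (Fin (n + e + 1)) k)) (n := 1)
      (fun t => (B t).2)
    rw [one_mul] at this
    exact this
  · intro p d hp
    have := IsHomogeneous.aeval hp (fun i => θ ⟨X i, hXM i⟩) (n := 1)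
      (fun i => hθ _)
    rw [one_mul] at this
    exact this
  · intro t ht
    have h4 := hB (Submodule.subset_span (show (⟨t, hT t ht⟩ : M) ∈ T' from ht))
    have h5 := Submodule.mem_map_of_mem (f := M.subtype) h4
    rw [Submodule.map_span, ← Set.range_comp] at h5
    have h6 : (M.subtype ∘ fun i => B (Sum.inl i)) = fun i => φ (X (Sum.inl i)) := by
      ext1 i; rw [hφX]; rfl
    rw [h6] at h5
    exact h5

lemma X_reg {τ : Type} (s : Set τ) (t : τ) (h : t ∉ s) :
    Reg (Ideal.span ((X : τ → MvPolynomial τ k) '' s)) (X t) := by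
  classical
  intro f hf
  rw [mem_ideal_span_X_image] at hf ⊢
  intro m hm
  have h1 : Finsupp.single t 1 + m ∈ (X t * f).support := by
    rw [mem_support_iff, coeff_X_mul]; exact mem_support_iff.1 hm
  obtain ⟨i, hi, h2⟩ := hf _ h1
  refine ⟨i, hi, ?_⟩
  have : t ≠ i := by rintro rfl; exact h hi
  simpa [this, Finsupp.single_apply] using h2

lemma Reg.map {A B : Type} [CommRing A] [CommRing B] (φ : A ≃+* B) {J : Ideal A} {x : A}
    (h : Reg J x) : Reg (J.map φ) (φ x) := by
  intro f hf
  rw [← Ideal.comap_symm, Ideal.mem_comap] at hf ⊢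
  apply h
  simpa using hf

lemma HH_sup {σ : Type} {J J' : Ideal (MvPolynomial σ k)} (h : HH J) (h' : HH J') :
    HH (J ⊔ J') := by
  intro p hp z
  obtain ⟨a, ha, b, hb, rfl⟩ := Submodule.mem_sup.1 hp
  rw [map_add]
  exact Submodule.add_mem_sup (h a ha z) (h' b hb z)

lemma HH_span {σ : Type} {T : Set (MvPolynomial σ k)} (h : ∀ t ∈ T, ∃ d : ℕ, t.IsHomogeneous d) :
    HH (Ideal.span T) := by
  intro p hp z
  induction hp using Submodule.span_induction generalizing z with
  | mem x hx =>
    obtain ⟨d, hd⟩ := h x hx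
    by_cases hz : z = d
    · subst hz
      rw [hc_of_homog (Or.inr ⟨d, rfl, hd⟩)]; exact Ideal.subset_span hx
    · rw [hc_of_homog_ne (Or.inr ⟨d, rfl, hd⟩) hz]; exact Ideal.zero_mem _
  | zero => simp
  | add x y _ _ hx hy => rw [map_add]; exact Ideal.add_mem _ (hx z) (hy z)
  | smul a x hx ih =>
    rw [smul_eq_mul, ← sum_hc a (a.totalDegree + 1) (by omega), Finset.sum_mul, map_sum]
    refine Ideal.sum_mem _ fun i _ => ?_
    rw [mul_comm, hc_mul_homog (hc_homog _ _)]
    exact Ideal.mul_mem_right _ _ (ih _)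

end coord
end
end Aux

namespace Aux
open MvPolynomial Paper
noncomputable section

section count
variable {k : Type} [Field k]

lemma finrank_restrictSupport {σ : Type} (S : Set (σ →₀ ℕ)) :
    Module.finrank k (restrictSupport k S) = S.ncard := by
  rw [Module.finrank_eq_nat_card_basis (basisRestrictSupport k S)]
  rfl

lemma finite_restrictSupport {σ : Type} (S : Set (σ →₀ ℕ)) (hS : S.Finite) :
    Module.Finite k (restrictSupport k S) := by
  have := hS.to_subtype
  exact Module.Finite.of_basis (basisRestrictSupport k S)

lemma degree_set {σ : Type} [Fintype σ] [DecidableEq σ] (d : ℕ) :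
    {m : σ →₀ ℕ | Finsupp.degree m = d} = (Finset.univ.finsuppAntidiag d : Finset (σ →₀ ℕ)) := by
  ext m
  simp [Finset.mem_finsuppAntidiag, Finsupp.degree_eq_sum]

lemma homog_eq_restrict {σ : Type} (d : ℕ) :
    homogeneousSubmodule σ k d = restrictSupport k {m : σ →₀ ℕ | Finsupp.degree m = d} :=
  homogeneousSubmodule_eq_finsupp_supported σ k d

lemma finrank_homog {σ : Type} [Fintype σ] (d : ℕ) :
    Module.finrank k (homogeneousSubmodule σ k d) = (Fintype.card σ).multichoose d := by
  classical
  rw [homog_eq_restrict, finrank_restrictSupport, degree_set, Set.ncard_coe_finset,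
    Finset.card_finsuppAntidiag_nat_eq_multichoose]
  rfl

/-- exponents of degree `d` with degree at most `r` in the second group of variables -/
def Wset (α β : Type) (r d : ℕ) : Set (α ⊕ β →₀ ℕ) :=
  {m | Finsupp.degree m = d ∧
    Finsupp.degree (m.comapDomain Sum.inr Sum.inr_injective.injOn) ≤ r}

lemma degree_sum {α β : Type} [Fintype α] [Fintype β] (m : α ⊕ β →₀ ℕ) :
    Finsupp.degree m = Finsupp.degree (m.comapDomain Sum.inl Sum.inl_injective.injOn) +
      Finsupp.degree (m.comapDomain Sum.inr Sum.inr_injective.injOn) := by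
  simp [Finsupp.degree_eq_sum]

lemma Wset_finite (α β : Type) [Fintype α] [Fintype β] (r d : ℕ) : (Wset α β r d).Finite := by
  classical
  apply Set.Finite.subset (s := {m : α ⊕ β →₀ ℕ | Finsupp.degree m = d})
  · rw [degree_set]; exact Finset.finite_toSet _
  · intro m hm; exact hm.1

lemma Wset_card (α β : Type) [Fintype α] [Fintype β] (r d : ℕ) (h : r ≤ d) :
    (Wset α β r d).ncard = ∑ i ∈ Finset.range (r + 1),
      (Fintype.card β).multichoose i * (Fintype.card α).multichoose (d - i) := by
  classical
  let T : Finset ((α →₀ ℕ) × (β →₀ ℕ)) := (Finset.range (r + 1)).biUnion fun i =>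
    (Finset.univ.finsuppAntidiag (d - i)) ×ˢ (Finset.univ.finsuppAntidiag i)
  have h1 : (Finsupp.sumFinsuppEquivProdFinsupp : (α ⊕ β →₀ ℕ) ≃ _) '' (Wset α β r d) = T := by
    rw [Equiv.image_eq_preimage_symm]
    ext ⟨a, b⟩
    have hl : (Finsupp.comapDomain Sum.inl (Finsupp.sumElim a b) Sum.inl_injective.injOn) = a := by
      ext; simp
    have hr : (Finsupp.comapDomain Sum.inr (Finsupp.sumElim a b) Sum.inr_injective.injOn) = b := by
      ext; simp
    have hT : ((a, b) ∈ T) ↔ Finsupp.degree b ≤ r ∧ Finsupp.degree a = d - Finsupp.degree b := by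
      simp [T, Finset.mem_finsuppAntidiag, Finsupp.degree_eq_sum]
    rw [Finset.mem_coe, hT]
    simp only [Set.mem_preimage, Wset, Finsupp.sumFinsuppEquivProdFinsupp_symm_apply]
    change Finsupp.degree (Finsupp.sumElim a b) = d ∧
      Finsupp.degree (Finsupp.comapDomain Sum.inr (Finsupp.sumElim a b) _) ≤ r ↔ _
    rw [degree_sum, hl, hr]
    omega
  rw [← Set.ncard_image_of_injective (Wset α β r d)
    (Finsupp.sumFinsuppEquivProdFinsupp : (α ⊕ β →₀ ℕ) ≃ _).injective, h1,
    Set.ncard_coe_finset, Finset.card_biUnion]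
  · refine Finset.sum_congr rfl fun i _ => ?_
    rw [Finset.card_product, Finset.card_finsuppAntidiag_nat_eq_multichoose,
      Finset.card_finsuppAntidiag_nat_eq_multichoose, mul_comm]
    rfl
  · intro i _ j _ hij
    rw [Function.onFun, Finset.disjoint_left]
    rintro ⟨a, b⟩ h1 h2
    simp [Finset.mem_finsuppAntidiag] at h1 h2
    exact hij (h1.2.symm.trans h2.2)

lemma sum_multichoose (e r : ℕ) :
    ∑ i ∈ Finset.range (r + 1), e.multichoose i = (e + r).choose r := by
  have : ∑ i ∈ Finset.range (r + 1), e.multichoose i = (e + 1).multichoose r := by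
    induction r with
    | zero => simp
    | succ r ih => rw [Finset.sum_range_succ, ih, Nat.multichoose_succ_succ, add_comm]
  rw [this, Nat.multichoose_eq]
  congr 1; omega

lemma multichoose_eq' (n t : ℕ) : (n + 1).multichoose t = (t + n).choose n := by
  rw [Nat.multichoose_eq, show n + 1 + t - 1 = t + n by omega, Nat.choose_symm_add]

/-- Hilbert polynomial with numerator `q` -/
def hp (n M : ℕ) (q : ℕ → ℚ) : Polynomial ℚ :=
  ∑ i ∈ Finset.range (M + 1), q i • Polynomial.preHilbertPoly ℚ n i

lemma hp_eval (n M : ℕ) (q : ℕ → ℚ) (d : ℕ) (h : M ≤ d) :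
    (hp n M q).eval (d : ℚ) =
      ∑ i ∈ Finset.range (M + 1), q i * (((n + 1).multichoose (d - i) : ℕ) : ℚ) := by
  rw [hp, Polynomial.eval_finsetSum]
  refine Finset.sum_congr rfl fun i hi => ?_
  have hi' : i ≤ d := by simp at hi; omega
  rw [Polynomial.eval_smul, Polynomial.preHilbertPoly_eq_choose_sub_add ℚ n hi', multichoose_eq',
    smul_eq_mul]

lemma hp_natDegree (n M : ℕ) (q : ℕ → ℚ) : (hp n M q).natDegree ≤ n := by
  apply Polynomial.natDegree_sum_le_of_forall_le
  intro i _
  exact (Polynomial.natDegree_smul_le _ _).trans (Polynomial.natDegree_preHilbertPoly ℚ n i).le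

lemma hp_coeff (n M : ℕ) (q : ℕ → ℚ) :
    (hp n M q).coeff n = (∑ i ∈ Finset.range (M + 1), q i) * ((n.factorial : ℚ))⁻¹ := by
  rw [hp, Polynomial.finsetSum_coeff, Finset.sum_mul]
  refine Finset.sum_congr rfl fun i _ => ?_
  rw [Polynomial.coeff_smul, Polynomial.coeff_preHilbertPoly_self, smul_eq_mul]

lemma coeff_le {n : ℕ} {A B : Polynomial ℚ} (hA : A.natDegree ≤ n) (hB : B.natDegree ≤ n)
    (h : ∀ᶠ d : ℕ in Filter.atTop, A.eval (d : ℚ) ≤ B.eval (d : ℚ)) : A.coeff n ≤ B.coeff n := by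
  by_contra hlt
  push Not at hlt
  let D := B - A
  have hDc : D.coeff n < 0 := by simp [D]; exact hlt
  have hDd : D.natDegree = n := by
    apply Polynomial.natDegree_eq_of_le_of_coeff_ne_zero
    · exact (Polynomial.natDegree_sub_le _ _).trans (max_le hB hA)
    · exact hDc.ne
  have hl : D.leadingCoeff < 0 := by rw [Polynomial.leadingCoeff, hDd]; exact hDc
  have hD0 : D ≠ 0 := by intro h0; rw [h0] at hl; simp at hl
  have ht : Filter.Tendsto (fun x : ℚ => (D * Polynomial.X).eval x) Filter.atTop Filter.atBot := by
    apply Polynomial.tendsto_atBot_of_leadingCoeff_nonpos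
    · rw [Polynomial.degree_mul, Polynomial.degree_X, Polynomial.degree_eq_natDegree hD0]
      exact_mod_cast Nat.succ_pos _
    · rw [Polynomial.leadingCoeff_mul, Polynomial.leadingCoeff_X, mul_one]; exact hl.le
  have h2 := (ht.comp tendsto_natCast_atTop_atTop).eventually (Filter.eventually_lt_atBot 0)
  obtain ⟨d, hd1, hd2⟩ := (h.and h2).exists
  simp [D] at hd2
  have : (0 : ℚ) ≤ (B.eval (d : ℚ) - A.eval (d : ℚ)) * d :=
    mul_nonneg (sub_nonneg.2 hd1) (Nat.cast_nonneg _)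
  linarith

end count
end
end Aux

namespace Aux
open MvPolynomial Paper
noncomputable section

section W
set_option linter.unusedSectionVars false
variable {k : Type} [Field k] {α β : Type} [Fintype α] [Fintype β]

/-- span of the monomials with small degree in the second group of variables -/
def W (k : Type) [Field k] (α β : Type) (r d : ℕ) : Submodule k (MvPolynomial (α ⊕ β) k) :=
  restrictSupport k (Wset α β r d)

/-- ideal generated by some variables of the first group -/
def Xs (k : Type) [Field k] {α : Type} (β : Type) (s : Set α) :
    Ideal (MvPolynomial (α ⊕ β) k) :=
  Ideal.span (X '' (Sum.inl '' s))

lemma W_homog {r d : ℕ} {w : MvPolynomial (α ⊕ β) k} (h : w ∈ W k α β r d) :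
    w.IsHomogeneous d := by
  rw [← mem_homogeneousSubmodule, homog_eq_restrict]
  exact restrictSupport_mono (R := k) (fun m (hm : m ∈ Wset α β r d) => hm.1) h

lemma W_of_le {r d : ℕ} (hd : d ≤ r) {w : MvPolynomial (α ⊕ β) k} (h : w.IsHomogeneous d) :
    w ∈ W k α β r d := by
  rw [← mem_homogeneousSubmodule, homog_eq_restrict] at h
  refine restrictSupport_mono (R := k) (fun m hm => ?_) h
  have hm' : Finsupp.degree m = d := hm
  refine ⟨hm', ?_⟩
  have := degree_sum m
  omega

lemma W_mul {r t d : ℕ} {u w : MvPolynomial (α ⊕ β) k} (hu : u ∈ W k α β 0 t)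
    (hw : w ∈ W k α β r d) : u * w ∈ W k α β r (t + d) := by
  have h1 := Submodule.mul_mem_mul hu hw
  unfold W at h1
  rw [← restrictSupport_add] at h1
  refine restrictSupport_mono (R := k) ?_ h1
  rintro _ ⟨a, ⟨ha1, ha2⟩, b, ⟨hb1, hb2⟩, rfl⟩
  refine ⟨?_, ?_⟩
  · simp [ha1, hb1]
  · have : (Finsupp.comapDomain (Sum.inr : β → α ⊕ β) (a + b) Sum.inr_injective.injOn) =
        Finsupp.comapDomain Sum.inr a Sum.inr_injective.injOn +
        Finsupp.comapDomain Sum.inr b Sum.inr_injective.injOn := by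
      ext; simp
    simp only [this, map_add]
    omega

lemma rename_W {t : ℕ} {u : MvPolynomial α k} (hu : u.IsHomogeneous t) :
    rename Sum.inl u ∈ W k α β 0 t := by
  classical
  rw [W, mem_restrictSupport_iff, support_rename_of_injective Sum.inl_injective]
  intro m hm
  simp only [Finset.coe_image, Set.mem_image, Finset.mem_coe] at hm
  obtain ⟨m', hm', rfl⟩ := hm
  have h1 : (Finsupp.comapDomain (Sum.inr : β → α ⊕ β) (Finsupp.mapDomain Sum.inl m')
      Sum.inr_injective.injOn) = 0 := by
    ext b
    simp only [Finsupp.comapDomain_apply, Finsupp.coe_zero, Pi.zero_apply]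
    apply Finsupp.mapDomain_of_notMem_range
    simp
  have h2 : (Finsupp.comapDomain (Sum.inl : α → α ⊕ β) (Finsupp.mapDomain Sum.inl m')
      Sum.inl_injective.injOn) = m' := by
    ext a
    simp [Finsupp.mapDomain_apply Sum.inl_injective]
  refine ⟨?_, ?_⟩
  · rw [degree_sum, h1, h2]
    rw [← mem_homogeneousSubmodule, homog_eq_restrict] at hu
    simpa using hu hm'
  · rw [h1]; simp

lemma X_W (i : α) : (X (Sum.inl i) : MvPolynomial (α ⊕ β) k) ∈ W k α β 0 1 := by
  have := rename_W (β := β) (isHomogeneous_X k i)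
  simpa using this

lemma mem_Xs {s : Set α} {p : MvPolynomial (α ⊕ β) k} :
    p ∈ Xs k β s ↔ ∃ c : s →₀ MvPolynomial (α ⊕ β) k,
      (c.sum fun t a => a * X (Sum.inl (t : α))) = p := by
  have : (X '' (Sum.inl '' s) : Set (MvPolynomial (α ⊕ β) k)) =
      Set.range fun t : s => X (Sum.inl (t : α)) := by
    ext x; simp
  rw [Xs, this, Finsupp.mem_ideal_span_range_iff_exists_finsupp]

lemma HH_Xs (s : Set α) : HH (Xs k β s) := by
  apply HH_span
  rintro _ ⟨t, -, rfl⟩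
  exact ⟨1, isHomogeneous_X k t⟩

variable {J : Ideal (MvPolynomial (α ⊕ β) k)} {r : ℕ}

lemma Lspan (hJ : HH J) (d : ℕ)
    (hex : ∀ p : MvPolynomial (α ⊕ β) k, p.IsHomogeneous d → ∃ w ∈ W k α β r d, p - w ∈ J)
    {s : Set α} {a : MvPolynomial (α ⊕ β) k} (ha : a ∈ J ⊔ Xs k β s) :
    ∃ w ∈ W k α β r (d + 1), w ∈ Xs k β s ∧ hc ((d + 1 : ℕ) : ℤ) a - w ∈ J := by
  obtain ⟨b, hb, c, hc', rfl⟩ := Submodule.mem_sup.1 ha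
  obtain ⟨q, rfl⟩ := mem_Xs.1 hc'
  have h1 : ∀ t : s, ∃ w ∈ W k α β r d, homogeneousComponent d (q t) - w ∈ J := fun t =>
    hex _ (homogeneousComponent_isHomogeneous d (q t))
  choose w hw hwJ using h1
  refine ⟨∑ t ∈ q.support, w t * X (Sum.inl (t : α)), ?_, ?_, ?_⟩
  · refine Submodule.sum_mem _ fun t _ => ?_
    rw [mul_comm, add_comm]
    exact W_mul (X_W _) (hw t)
  · refine Submodule.sum_mem _ fun t _ => ?_
    exact Ideal.mul_mem_left _ _ (Ideal.subset_span ⟨_, ⟨t, t.2, rfl⟩, rfl⟩)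
  · rw [map_add, add_sub_assoc]
    refine J.add_mem (hJ b hb _) ?_
    rw [Finsupp.sum, map_sum, ← Finset.sum_sub_distrib]
    refine Ideal.sum_mem _ fun t _ => ?_
    rw [hc_mul_homog (Or.inr ⟨1, rfl, isHomogeneous_X k _⟩), ← sub_mul]
    have : (((d + 1 : ℕ) : ℤ) - ((1 : ℕ) : ℤ)) = (d : ℤ) := by push_cast; ring
    rw [this, hc_nat]
    exact J.mul_mem_right _ (hwJ t)

lemma exists_W (hJ : HH J)
    (hred : ∀ d, r < d → ∀ p : MvPolynomial (α ⊕ β) k, p.IsHomogeneous d →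
      p ∈ J ⊔ Xs k β Set.univ) (d : ℕ) :
    ∀ p : MvPolynomial (α ⊕ β) k, p.IsHomogeneous d → ∃ w ∈ W k α β r d, p - w ∈ J := by
  induction d with
  | zero => intro p hp; exact ⟨p, W_of_le (Nat.zero_le _) hp, by simp⟩
  | succ d ih =>
    intro p hp
    rcases le_or_gt (d + 1) r with h | h
    · exact ⟨p, W_of_le h hp, by simp⟩
    · obtain ⟨w, hw, -, hwJ⟩ := Lspan hJ d ih (hred _ h p hp)
      rw [hc_of_homog (Or.inr ⟨_, rfl, hp⟩)] at hwJ
      exact ⟨w, hw, hwJ⟩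

lemma W_reg (hJ : HH J)
    (hred : ∀ d, r < d → ∀ p : MvPolynomial (α ⊕ β) k, p.IsHomogeneous d →
      p ∈ J ⊔ Xs k β Set.univ)
    (hW : ∀ d, ∀ w ∈ W k α β r d, w ∈ J → w = 0) (s : Set α) (i : α) (hi : i ∉ s) :
    Reg (J ⊔ Xs k β s) (X (Sum.inl i)) := by
  have hK : HH (J ⊔ Xs k β s) := HH_sup hJ (HH_Xs s)
  have key : ∀ (d : ℕ) (f : MvPolynomial (α ⊕ β) k), f.IsHomogeneous d →
      X (Sum.inl i) * f ∈ J ⊔ Xs k β s → f ∈ J ⊔ Xs k β s := by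
    intro d f hf hXf
    obtain ⟨w, hw, hwJ⟩ := exists_W hJ hred d f hf
    obtain ⟨v, hv, hvs, hvJ⟩ := Lspan hJ d (exists_W hJ hred d) hXf
    rw [hc_of_homog (Or.inr ⟨_, rfl, by
      rw [add_comm]; exact (isHomogeneous_X k (Sum.inl i)).mul hf⟩)] at hvJ
    have h1 : X (Sum.inl i) * w - v ∈ J := by
      have h2 := J.sub_mem hvJ (J.mul_mem_left (X (Sum.inl i)) hwJ)
      convert h2 using 1; ring
    have h2 := hW (d + 1) _ (Submodule.sub_mem _ (by
      rw [add_comm]; exact W_mul (X_W i) hw) hv) h1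
    have h3 : w ∈ Xs k β s := by
      apply X_reg (Sum.inl '' s) (Sum.inl i)
      · simpa using hi
      · rw [sub_eq_zero.1 h2]; exact hvs
    have : f = (f - w) + w := by ring
    rw [this]
    exact Submodule.add_mem_sup hwJ h3
  intro f hf
  rw [← sum_hc f (f.totalDegree + 1) (by omega)]
  refine Ideal.sum_mem _ fun z _ => ?_
  rw [hc_nat]
  refine key z _ (homogeneousComponent_isHomogeneous z f) ?_
  have := hK _ hf ((z : ℤ) + 1)
  rw [mul_comm, hc_mul_homog (Or.inr ⟨1, rfl, isHomogeneous_X k _⟩)] at this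
  rw [mul_comm]
  convert this using 2
  rw [← hc_nat]; simp

/-- Hilbert function of a quotient of a polynomial ring -/
def hf {σ : Type} (J : Ideal (MvPolynomial σ k)) (d : ℕ) : ℕ :=
  Module.finrank k ((homogeneousSubmodule σ k d).map (Ideal.Quotient.mkₐ k J).toLinearMap)

lemma hf_eq {N : ℕ} (I : Ideal (MvPolynomial (Fin N) k)) (d : ℕ) : hilbFn k I d = hf I d := rfl

lemma hf_map {σ σ' : Type} (φ : MvPolynomial σ k ≃ₐ[k] MvPolynomial σ' k)
    (h1 : ∀ p d, p.IsHomogeneous d → (φ p).IsHomogeneous d)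
    (h2 : ∀ p d, p.IsHomogeneous d → (φ.symm p).IsHomogeneous d)
    (I : Ideal (MvPolynomial σ' k)) (d : ℕ) : hf (I.comap φ) d = hf I d := by
  let E : (MvPolynomial σ k ⧸ (I.comap φ)) ≃ₐ[k] (MvPolynomial σ' k ⧸ I) :=
    Ideal.quotientEquivAlg _ _ φ (Ideal.map_comap_of_surjective _ φ.surjective I).symm
  have hE : ∀ p, E (Ideal.Quotient.mk _ p) = Ideal.Quotient.mk _ (φ p) := fun p => rfl
  have : (homogeneousSubmodule σ' k d).map (Ideal.Quotient.mkₐ k I).toLinearMap =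
      ((homogeneousSubmodule σ k d).map (Ideal.Quotient.mkₐ k (I.comap φ)).toLinearMap).map
        (E.toLinearEquiv : _ →ₗ[k] _) := by
    ext x
    simp only [Submodule.mem_map, mem_homogeneousSubmodule]
    constructor
    · rintro ⟨p, hp, rfl⟩
      refine ⟨_, ⟨φ.symm p, h2 p d hp, rfl⟩, ?_⟩
      change E (Ideal.Quotient.mk _ (φ.symm p)) = Ideal.Quotient.mk _ p
      rw [hE]; simp
    · rintro ⟨_, ⟨p, hp, rfl⟩, rfl⟩
      exact ⟨φ p, h1 p d hp, rfl⟩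
  rw [hf, hf, this]
  exact (LinearEquiv.finrank_map_eq E.toLinearEquiv _).symm

lemma hf_W (hJ : HH J)
    (hred : ∀ d, r < d → ∀ p : MvPolynomial (α ⊕ β) k, p.IsHomogeneous d →
      p ∈ J ⊔ Xs k β Set.univ) (d : ℕ) :
    hf J d + Module.finrank k (LinearMap.ker
      ((Ideal.Quotient.mkₐ k J).toLinearMap.domRestrict (W k α β r d))) =
      (Wset α β r d).ncard := by
  have hfin : Module.Finite k (W k α β r d) := finite_restrictSupport _ (Wset_finite α β r d)
  have h1 := LinearMap.finrank_range_add_finrank_ker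
    ((Ideal.Quotient.mkₐ k J).toLinearMap.domRestrict (W k α β r d))
  have h2 : Module.finrank k (W k α β r d) = (Wset α β r d).ncard := finrank_restrictSupport _
  rw [← h2, ← h1, hf]
  have : (homogeneousSubmodule (α ⊕ β) k d).map (Ideal.Quotient.mkₐ k J).toLinearMap =
    (W k α β r d).map (Ideal.Quotient.mkₐ k J).toLinearMap := by
    apply le_antisymm
    · rintro _ ⟨p, hp, rfl⟩
      obtain ⟨w, hw, hwJ⟩ := exists_W hJ hred d p hp
      refine ⟨w, hw, ?_⟩
      exact ((Ideal.Quotient.eq).2 hwJ).symm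
    · exact Submodule.map_mono fun w hw => W_homog hw
  rw [this, LinearMap.range_domRestrict]

lemma hf_le (hJ : HH J)
    (hred : ∀ d, r < d → ∀ p : MvPolynomial (α ⊕ β) k, p.IsHomogeneous d →
      p ∈ J ⊔ Xs k β Set.univ) (d : ℕ) : hf J d ≤ (Wset α β r d).ncard := by
  have := hf_W hJ hred d
  omega

lemma hf_lt (hJ : HH J)
    (hred : ∀ d, r < d → ∀ p : MvPolynomial (α ⊕ β) k, p.IsHomogeneous d →
      p ∈ J ⊔ Xs k β Set.univ) {d0 : ℕ} {f : MvPolynomial (α ⊕ β) k} (hf0 : f ≠ 0)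
    (hfW : f ∈ W k α β r d0) (hfJ : f ∈ J) (d : ℕ) (hd : d0 ≤ d) :
    hf J d + (Fintype.card α).multichoose (d - d0) ≤ (Wset α β r d).ncard := by
  have hfin : Module.Finite k (W k α β r d) := finite_restrictSupport _ (Wset_finite α β r d)
  rw [← hf_W hJ hred d, ← finrank_homog (k := k) (d - d0)]
  refine Nat.add_le_add_left ?_ _
  let g : homogeneousSubmodule α k (d - d0) →ₗ[k] LinearMap.ker
      ((Ideal.Quotient.mkₐ k J).toLinearMap.domRestrict (W k α β r d)) :=
    { toFun := fun u => ⟨⟨rename Sum.inl u.1 * f, by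
          have := W_mul (rename_W (β := β) u.2) hfW
          rwa [Nat.sub_add_cancel hd] at this⟩, by
          rw [LinearMap.mem_ker]
          exact Ideal.Quotient.eq_zero_iff_mem.2 (J.mul_mem_left _ hfJ)⟩
      map_add' := by
        intro u v
        apply Subtype.ext; apply Subtype.ext
        simp [add_mul]
      map_smul' := by
        intro c u
        apply Subtype.ext; apply Subtype.ext
        simp }
  apply LinearMap.finrank_le_finrank_of_injective (f := g)
  intro u v huv
  have h1 : rename Sum.inl u.1 * f = rename Sum.inl v.1 * f :=
    congrArg (fun x => x.1.1) huv
  have h2 := mul_right_cancel₀ hf0 h1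
  exact Subtype.ext (rename_injective _ Sum.inl_injective h2)

end W
end
end Aux

namespace Aux
open MvPolynomial Paper
noncomputable section

section setup
variable {k : Type} [Field k]

lemma HH_of {N : ℕ} {I : Ideal (MvPolynomial (Fin N) k)} (h : IdealHomog k I) : HH I := by
  intro p hp z
  rcases lt_or_ge z 0 with hz | hz
  · rw [hc_neg hz]; exact I.zero_mem
  · lift z to ℕ using hz
    rw [hc_nat]; exact h p hp z

lemma hc_map {σ σ' : Type} (φ : MvPolynomial σ k ≃ₐ[k] MvPolynomial σ' k)
    (h1 : ∀ p d, p.IsHomogeneous d → (φ p).IsHomogeneous d) (z : ℤ) (p : MvPolynomial σ k) :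
    hc z (φ p) = φ (hc z p) := by
  have h : ∀ i : ℕ, hc z (φ (hc (i : ℤ) p)) = if (i : ℤ) = z then φ (hc z p) else 0 := by
    intro i
    have h2 : HomogOfDeg k (φ (hc (i : ℤ) p)) (i : ℤ) :=
      Or.inr ⟨i, rfl, h1 _ _ (by rw [hc_nat]; exact homogeneousComponent_isHomogeneous i p)⟩
    split_ifs with hi
    · subst hi; exact hc_of_homog h2
    · exact hc_of_homog_ne h2 (Ne.symm hi)
  rcases lt_or_ge z 0 with hz | hz
  · rw [hc_neg hz, hc_neg hz, map_zero]
  lift z to ℕ using hz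
  conv_lhs => rw [← sum_hc p (p.totalDegree + 1 + z) (by omega)]
  rw [map_sum, map_sum]
  simp_rw [h]
  simp only [Nat.cast_inj]
  rw [Finset.sum_ite_eq', if_pos (by simp)]

lemma HH_comap {σ σ' : Type} (φ : MvPolynomial σ k ≃ₐ[k] MvPolynomial σ' k)
    (h1 : ∀ p d, p.IsHomogeneous d → (φ p).IsHomogeneous d) {I : Ideal (MvPolynomial σ' k)}
    (hI : HH I) : HH (I.comap φ) := by
  intro p hp z
  rw [Ideal.mem_comap, ← hc_map φ h1]
  exact hI _ hp z

lemma homog_mul_le {σ : Type} {K : Ideal (MvPolynomial σ k)} {m d : ℕ} (hmd : m ≤ d)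
    (hm : ∀ p : MvPolynomial σ k, p.IsHomogeneous m → p ∈ K) :
    ∀ p : MvPolynomial σ k, p.IsHomogeneous d → p ∈ K := by
  intro p hp
  have h1 : homogeneousSubmodule σ k d ≤ K.restrictScalars k := by
    rw [← homogeneousSubmodule_one_pow, ← Nat.add_sub_cancel' hmd, pow_add,
      homogeneousSubmodule_one_pow, Submodule.mul_le]
    intro a ha b _
    exact K.mul_mem_right _ (hm a ha)
  exact h1 hp

/-- properties of an adapted coordinate system -/
structure Good (n e r : ℕ) (I : Ideal (MvPolynomial (Fin (n + e + 1)) k))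
    (φ : MvPolynomial (Fin (n + 1) ⊕ Fin e) k ≃ₐ[k] MvPolynomial (Fin (n + e + 1)) k) : Prop where
  h1 : ∀ p d, p.IsHomogeneous d → (φ p).IsHomogeneous d
  h2 : ∀ p d, p.IsHomogeneous d → (φ.symm p).IsHomogeneous d
  hJ : HH (I.comap φ)
  hred : ∀ d, r < d → ∀ p : MvPolynomial (Fin (n + 1) ⊕ Fin e) k, p.IsHomogeneous d →
      p ∈ I.comap φ ⊔ Xs k (Fin e) Set.univ

lemma exists_good (n e r : ℕ) (I : Ideal (MvPolynomial (Fin (n + e + 1)) k))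
    (hI : IdealHomog k I) (L : Finset (MvPolynomial (Fin (n + e + 1)) k ⧸ I))
    (hL : (L : Set (MvPolynomial (Fin (n + e + 1)) k ⧸ I)) ⊆ quotComponent k I 1)
    (hc : L.card = n + 1)
    (hred : quotComponent k I (r + 1) ≤
      (Ideal.span (L : Set (MvPolynomial (Fin (n + e + 1)) k ⧸ I))).restrictScalars k) :
    ∃ φ, Good n e r I φ := by
  classical
  have hl : ∀ y : L, ∃ t : MvPolynomial (Fin (n + e + 1)) k, t.IsHomogeneous 1 ∧
      Ideal.Quotient.mk I t = y := by
    intro y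
    obtain ⟨t, ht, hty⟩ := hL y.2
    exact ⟨t, ht, hty⟩
  choose t ht1 ht2 using hl
  have hTf : (Set.range t).Finite := Set.finite_range t
  have hTc : (Set.range t).ncard ≤ n + 1 := by
    rw [← Set.image_univ]
    refine (Set.ncard_image_le Set.finite_univ).trans ?_
    rw [Set.ncard_univ, Nat.card_eq_fintype_card, Fintype.card_coe, hc]
  obtain ⟨φ, h1, h2, h3⟩ := exists_coord n e (Set.range t) hTf (by rintro _ ⟨y, rfl⟩; exact ht1 y)
    hTc
  refine ⟨φ, h1, h2, HH_comap φ h1 (HH_of hI), ?_⟩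
  have hLspan : Ideal.span (L : Set (MvPolynomial (Fin (n + e + 1)) k ⧸ I)) =
      (Ideal.span (Set.range t)).map (Ideal.Quotient.mk I) := by
    rw [Ideal.map_span, ← Set.range_comp]
    congr 1
    ext y
    constructor
    · intro hy; exact ⟨⟨y, hy⟩, ht2 _⟩
    · rintro ⟨y', rfl⟩; simp [ht2]
  intro d hd
  apply homog_mul_le (m := r + 1) hd
  intro p hp
  have h4 : Ideal.Quotient.mk I (φ p) ∈ Ideal.span (L : Set (MvPolynomial (Fin (n + e + 1)) k ⧸ I)) :=
    hred ⟨φ p, h1 _ _ hp, rfl⟩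
  rw [hLspan, Ideal.mem_quotient_iff_mem_sup] at h4
  have h5 : Ideal.span (Set.range t) ⊔ I ≤ (I.comap φ ⊔ Xs k (Fin e) Set.univ).comap φ.symm := by
    apply sup_le
    · rw [Ideal.span_le]
      rintro _ ⟨y, rfl⟩
      have h6 := h3 (t y) ⟨y, rfl⟩
      have h7 : Submodule.span k (Set.range fun i => φ (X (Sum.inl i))) ≤
          ((I.comap φ ⊔ Xs k (Fin e) Set.univ).comap φ.symm).restrictScalars k := by
        rw [Submodule.span_le]
        rintro _ ⟨i, rfl⟩
        change φ.symm (φ (X (Sum.inl i))) ∈ I.comap φ ⊔ Xs k (Fin e) Set.univ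
        rw [AlgEquiv.symm_apply_apply]
        exact Ideal.mem_sup_right (Ideal.subset_span ⟨_, ⟨i, trivial, rfl⟩, rfl⟩)
      exact h7 h6
    · intro x hx
      rw [Ideal.mem_comap]
      apply Ideal.mem_sup_left
      rw [Ideal.mem_comap]; simpa using hx
  have := h5 h4
  rw [Ideal.mem_comap] at this
  simpa using this

variable {n e r : ℕ} {I : Ideal (MvPolynomial (Fin (n + e + 1)) k)}
  {φ : MvPolynomial (Fin (n + 1) ⊕ Fin e) k ≃ₐ[k] MvPolynomial (Fin (n + e + 1)) k}

/-- numerator of the extremal Hilbert series -/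
def qe (e : ℕ) : ℕ → ℚ := fun i => (e.multichoose i : ℚ)

lemma Wcard_eval (n e r d : ℕ) (h : r ≤ d) :
    ((Wset (Fin (n + 1)) (Fin e) r d).ncard : ℚ) = (hp n r (qe e)).eval (d : ℚ) := by
  rw [hp_eval n r _ d h, Wset_card _ _ r d h]
  simp [qe]

lemma hp_qe_coeff (n e r : ℕ) :
    (hp n r (qe e)).coeff n = ((e + r).choose r : ℚ) * ((n.factorial : ℚ))⁻¹ := by
  rw [hp_coeff, ← sum_multichoose]
  simp [qe]

lemma good_le (hG : Good n e r I φ) :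
    ∀ᶠ d : ℕ in Filter.atTop, (hilbFn k I d : ℚ) ≤ (hp n r (qe e)).eval (d : ℚ) := by
  filter_upwards [Filter.eventually_ge_atTop r] with d hd
  rw [← Wcard_eval n e r d hd, hf_eq, ← hf_map φ hG.h1 hG.h2]
  exact_mod_cast hf_le hG.hJ hG.hred d

lemma good_W (hG : Good n e r I φ) (hdeg : HasDeg k I n ((e + r).choose r)) :
    ∀ d, ∀ w ∈ W k (Fin (n + 1)) (Fin e) r d, w ∈ I.comap φ → w = 0 := by
  intro d0 w hw hwJ
  by_contra hw0
  obtain ⟨P, hPn, hPD, hPe⟩ := hdeg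
  let q1 : ℕ → ℚ := fun i => if i = d0 then 1 else 0
  have hle : P.coeff n ≤ (hp n r (qe e) - hp n d0 q1).coeff n := by
    apply coeff_le hPn.le
    · exact (Polynomial.natDegree_sub_le _ _).trans (max_le (hp_natDegree _ _ _) (hp_natDegree _ _ _))
    filter_upwards [hPe, Filter.eventually_ge_atTop r, Filter.eventually_ge_atTop d0] with d h1 h2 h3
    rw [← h1, Polynomial.eval_sub, ← Wcard_eval n e r d h2, hp_eval n d0 _ d h3, hf_eq,
      ← hf_map φ hG.h1 hG.h2]
    have h4 := hf_lt hG.hJ hG.hred hw0 hw hwJ d h3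
    have h5 : ∑ i ∈ Finset.range (d0 + 1), q1 i * (((n + 1).multichoose (d - i) : ℕ) : ℚ) =
        (((n + 1).multichoose (d - d0) : ℕ) : ℚ) := by
      simp [q1]
    rw [h5, le_sub_iff_add_le]
    rw [Fintype.card_fin] at h4
    exact_mod_cast h4
  have hfac : (0 : ℚ) < (n.factorial : ℚ) := by exact_mod_cast n.factorial_pos
  have h6 : P.coeff n = ((e + r).choose r : ℚ) * ((n.factorial : ℚ))⁻¹ := by
    rw [hPD, Polynomial.leadingCoeff, hPn, mul_assoc, mul_inv_cancel₀ hfac.ne', mul_one]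
  rw [Polynomial.coeff_sub, hp_qe_coeff, hp_coeff, h6] at hle
  have h7 : ∑ i ∈ Finset.range (d0 + 1), q1 i = 1 := by simp [q1]
  rw [h7, one_mul] at hle
  have : (0 : ℚ) < ((n.factorial : ℚ))⁻¹ := inv_pos.2 hfac
  linarith

end setup
end
end Aux

namespace Aux
open MvPolynomial Paper
noncomputable section

section fwd
variable {k : Type} [Field k]

lemma isWeaklyRegular_iff' {A : Type} [CommRing A] (I : Ideal A) (xs : List A) :
    RingTheory.Sequence.IsWeaklyRegular (A ⧸ I) (xs.map (Ideal.Quotient.mk I)) ↔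
      ∀ (i : ℕ) (h : i < xs.length), Reg (I ⊔ Ideal.ofList (xs.take i)) xs[i] := by
  have key : ∀ (i : ℕ) (h : i < xs.length),
    IsSMulRegular ((A ⧸ I) ⧸ (Ideal.ofList ((xs.map (Ideal.Quotient.mk I)).take i) • ⊤ :
      Submodule (A ⧸ I) (A ⧸ I))) ((xs.map (Ideal.Quotient.mk I))[i]'(by simpa using h)) ↔
      Reg (I ⊔ Ideal.ofList (xs.take i)) xs[i] := by
    intro i h
    rw [isSMulRegular_quotient_iff_mem_of_smul_mem]
    have h1 : ∀ f : A, Ideal.Quotient.mk I f ∈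
        (Ideal.ofList ((xs.map (Ideal.Quotient.mk I)).take i) • ⊤ :
          Submodule (A ⧸ I) (A ⧸ I)) ↔ f ∈ I ⊔ Ideal.ofList (xs.take i) := by
      intro f
      rw [Ideal.smul_eq_mul, Ideal.mul_top, ← List.map_take, ← Ideal.map_ofList,
        Ideal.mem_quotient_iff_mem_sup, sup_comm]
    have hmul : ∀ a b : A, Ideal.Quotient.mk I a • Ideal.Quotient.mk I b =
        Ideal.Quotient.mk I (a * b) := fun a b => rfl
    constructor
    · intro hh f hf
      have := hh (Ideal.Quotient.mk I f)
      rw [List.getElem_map, hmul, h1, h1] at this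
      exact this hf
    · intro hh x hx
      obtain ⟨f, rfl⟩ := Ideal.Quotient.mk_surjective x
      rw [List.getElem_map, hmul, h1] at hx
      rw [h1]
      exact hh f hx
  constructor
  · intro h i hi
    exact (key i hi).1 (h.regular_mod_prev i (by simpa using hi))
  · intro h
    exact ⟨fun i hi => (key i (by simpa using hi)).2 (h i (by simpa using hi))⟩

variable {n e r : ℕ} {I : Ideal (MvPolynomial (Fin (n + e + 1)) k)}
  {φ : MvPolynomial (Fin (n + 1) ⊕ Fin e) k ≃ₐ[k] MvPolynomial (Fin (n + e + 1)) k}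

lemma map_span_X {σ σ' : Type} (φ : MvPolynomial σ k ≃ₐ[k] MvPolynomial σ' k) (s : Set σ) :
    (Ideal.span (X '' s)).map φ.toRingEquiv = Ideal.span ((fun t => φ (X t)) '' s) := by
  rw [Ideal.map_span, ← Set.image_comp]
  rfl

lemma map_comap' {σ σ' : Type} (φ : MvPolynomial σ k ≃ₐ[k] MvPolynomial σ' k)
    (I : Ideal (MvPolynomial σ' k)) : (I.comap φ).map φ.toRingEquiv = I :=
  Ideal.map_comap_of_surjective φ.toRingEquiv φ.surjective I

lemma cc_map (hG : Good n e r I φ) (p) : constantCoeff (φ p) = constantCoeff p := by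
  have := hc_map φ hG.h1 0 p
  rw [hc_zero_eq, hc_zero_eq] at this
  have h2 : φ (C (constantCoeff p)) = C (constantCoeff p) := φ.commutes _
  rw [h2] at this
  exact C_injective _ _ this

lemma good_reg (hG : Good n e r I φ) (hdeg : HasDeg k I n ((e + r).choose r))
    (s : Set (Fin (n + 1))) (i : Fin (n + 1)) (hi : i ∉ s) :
    Reg (I ⊔ Ideal.span ((fun t => φ (X t)) '' (Sum.inl '' s))) (φ (X (Sum.inl i))) := by
  have h1 := (W_reg hG.hJ hG.hred (good_W hG hdeg) s i hi).map φ.toRingEquiv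
  rw [Ideal.map_sup, map_comap', Xs, map_span_X] at h1
  exact h1

lemma good_low (hG : Good n e r I φ) (hdeg : HasDeg k I n ((e + r).choose r)) :
    ∀ f ∈ I, ∀ d ≤ r, f.IsHomogeneous d → f = 0 := by
  intro f hf d hd hfd
  have := good_W hG hdeg d (φ.symm f) (W_of_le hd (hG.h2 f d hfd))
    (by rw [Ideal.mem_comap]; simpa using hf)
  simpa using this

lemma fwd_lin (hG : Good n e r I φ) (hdeg : HasDeg k I n ((e + r).choose r))
    (res : MinGradedFreeRes k (Fin (n + e + 1)) (MvPolynomial (Fin (n + e + 1)) k ⧸ I)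
      (quotDeg k I)) (i : ℕ) (j : ℤ) (h : res.β i j ≠ 0) :
    (i = 0 ∧ j = 0) ∨ (1 ≤ i ∧ j = (r : ℤ)) := by
  classical
  refine linear_of_bounds res (good_low hG hdeg) ?_ i j h
  intro i j h
  refine lin_upper res (fun t => φ (X t)) (fun t => hG.h1 _ _ (isHomogeneous_X k t))
    (Finset.univ.map ⟨Sum.inl, Sum.inl_injective⟩) r ?_ ?_ ?_ ?_ ?_ i j h
  · intro s
    apply HH_span
    rintro _ ⟨t, -, rfl⟩
    exact ⟨1, hG.h1 _ _ (isHomogeneous_X k t)⟩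
  · intro s t ht
    have := (X_reg (k := k) (s : Set (Fin (n + 1) ⊕ Fin e)) t (by simpa using ht)).map φ.toRingEquiv
    rw [map_span_X] at this
    exact this
  · intro s t hs ht hts
    simp only [Finset.mem_map, Finset.mem_univ, true_and] at ht
    obtain ⟨i, rfl⟩ := ht
    have hs' : (s : Set (Fin (n + 1) ⊕ Fin e)) = Sum.inl '' {i | Sum.inl i ∈ s} := by
      ext t
      constructor
      · intro hst
        obtain ⟨i, -, rfl⟩ := Finset.mem_map.1 (hs hst)
        exact ⟨i, hst, rfl⟩
      · rintro ⟨i, hi, rfl⟩; exact hi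
    rw [hs']
    exact good_reg hG hdeg _ i hts
  · intro p
    obtain ⟨p, rfl⟩ := φ.surjective p
    rw [cc_map hG, ← map_span_X, ← Ideal.comap_symm, Ideal.mem_comap]
    have : φ.toRingEquiv.symm (φ p) = p := φ.symm_apply_apply p
    rw [this, mem_ideal_span_X_image]
    constructor
    · intro hp m hm
      by_contra hcon
      push Not at hcon
      have : m = 0 := by ext t; exact hcon t (by simp)
      subst this
      exact (mem_support_iff.1 hm) hp
    · intro hp
      by_contra hcon
      obtain ⟨t, -, ht⟩ := hp 0 (mem_support_iff.2 hcon)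
      simp at ht
  · intro d hd p hp
    have h1 := hG.hred d hd _ (hG.h2 _ _ hp)
    have h2 : p ∈ (I.comap φ ⊔ Xs k (Fin e) Set.univ).map φ.toRingEquiv := by
      rw [← Ideal.comap_symm, Ideal.mem_comap]; exact h1
    rw [Ideal.map_sup, map_comap', Xs, map_span_X] at h2
    simpa using h2

lemma fwd_cm (hI : IdealHomog k I) (hp : I ≠ ⊤) (hG : Good n e r I φ)
    (hdeg : HasDeg k I n ((e + r).choose r)) : IsCMQuot k I (n + 1) := by
  let xs : List (MvPolynomial (Fin (n + e + 1)) k) := List.ofFn fun i => φ (X (Sum.inl i))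
  have hirr : ∀ x : MvPolynomial (Fin (n + e + 1)) k, x.IsHomogeneous 1 →
      Ideal.Quotient.mk I x ∈ irrelevantIdeal k I := by
    intro x hx
    rw [← mem_homogeneousSubmodule, homogeneousSubmodule_one_eq_span_X] at hx
    have : Submodule.span k (Set.range X) ≤
        ((irrelevantIdeal k I).comap (Ideal.Quotient.mk I)).restrictScalars k := by
      rw [Submodule.span_le]
      rintro _ ⟨i, rfl⟩
      exact Ideal.subset_span ⟨i, rfl⟩
    exact this hx
  have hx1 : ∀ x ∈ xs.map (Ideal.Quotient.mk I), x ∈ irrelevantIdeal k I := by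
    intro x hx
    simp only [List.mem_map, xs, List.mem_ofFn] at hx
    obtain ⟨_, ⟨i, rfl⟩, rfl⟩ := hx
    exact hirr _ (hG.h1 _ _ (isHomogeneous_X k _))
  refine ⟨xs.map (Ideal.Quotient.mk I), by simp [xs], hx1, ?_, ?_⟩
  · rw [isWeaklyRegular_iff']
    intro i h
    have hi : i < n + 1 := by simpa [xs] using h
    have h1 := good_reg hG hdeg {j | (j : ℕ) < i} ⟨i, hi⟩ (by simp)
    have h2 : xs[i] = φ (X (Sum.inl ⟨i, hi⟩)) := by simp only [xs, List.getElem_ofFn]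
    have h3 : Ideal.ofList (xs.take i) =
        Ideal.span ((fun t => φ (X t)) '' (Sum.inl '' {j : Fin (n + 1) | (j : ℕ) < i})) := by
      unfold Ideal.ofList
      congr 1
      ext x
      simp only [xs, Set.mem_image, exists_exists_and_eq_and]
      change x ∈ List.take i _ ↔ _
      rw [List.mem_take_iff_getElem]
      constructor
      · rintro ⟨j, hj, rfl⟩
        simp only [List.length_ofFn, lt_inf_iff] at hj
        exact ⟨⟨j, by omega⟩, by simpa using hj.1, by simp only [List.getElem_ofFn]⟩
      · rintro ⟨j, hj, rfl⟩
        have hj' : (j : ℕ) < i := hj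
        exact ⟨j, by simp only [List.length_ofFn, lt_inf_iff]; omega, by simp only [List.getElem_ofFn]⟩
    rw [h2, h3]
    exact h1
  · intro htop
    have h1 : (1 : MvPolynomial (Fin (n + e + 1)) k ⧸ I) ∈ irrelevantIdeal k I := by
      have h2 : (1 : MvPolynomial (Fin (n + e + 1)) k ⧸ I) ∈
          (⊤ : Submodule (MvPolynomial (Fin (n + e + 1)) k ⧸ I) _) := trivial
      rw [htop, Ideal.smul_eq_mul, Ideal.mul_top] at h2
      exact (Ideal.span_le.2 fun x hx => hx1 x hx) h2
    have h3 : irrelevantIdeal k I = (Ideal.span (Set.range X)).map (Ideal.Quotient.mk I) := by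
      rw [Ideal.map_span, ← Set.range_comp]; rfl
    rw [h3, ← map_one (Ideal.Quotient.mk I), Ideal.mem_quotient_iff_mem_sup] at h1
    obtain ⟨a, ha, b, hb, hab⟩ := Submodule.mem_sup.1 h1
    have h4 := constCoeff_of_mem hI hp hb
    have h5 : constantCoeff a = 0 := by
      have : Ideal.span (Set.range X) ≤ RingHom.ker (constantCoeff (σ := Fin (n + e + 1)) (R := k)) := by
        rw [Ideal.span_le]
        rintro _ ⟨i, rfl⟩
        simp
      exact this ha
    have := congrArg constantCoeff hab
    simp [h4, h5] at this

end fwd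
end
end Aux

namespace Aux
open MvPolynomial Paper
noncomputable section

section dims
variable {k : Type} [Field k]

/-- chains of primes above `J` have length at most `s` -/
def DimLE {A : Type} [CommRing A] (J : Ideal A) (s : ℕ) : Prop :=
  ∀ c : LTSeries (PrimeSpectrum.zeroLocus (J : Set A)), c.length ≤ s

lemma dimLE_iff {A : Type} [CommRing A] (J : Ideal A) (s : ℕ) :
    DimLE J s ↔ ringKrullDim (A ⧸ J) ≤ s := by
  rw [ringKrullDim_quotient, Order.krullDim, iSup_le_iff]
  refine forall_congr' fun c => ?_
  norm_cast

/-- the irrelevant ideal -/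
def mm (σ k : Type) [Field k] : Ideal (MvPolynomial σ k) := Ideal.span (Set.range X)

lemma mm_eq_ker (σ : Type) : mm σ k = RingHom.ker (constantCoeff (σ := σ) (R := k)) := by
  apply le_antisymm
  · rw [mm, Ideal.span_le]
    rintro _ ⟨i, rfl⟩
    simp
  · intro p hp
    rw [mm, ← Set.image_univ, mem_ideal_span_X_image]
    intro m hm
    by_contra hcon
    push Not at hcon
    have : m = 0 := by ext t; exact hcon t (by simp)
    subst this
    exact (mem_support_iff.1 hm) hp

instance mm_max (σ : Type) : (mm σ k).IsMaximal := by
  rw [mm_eq_ker]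
  exact RingHom.ker_isMaximal_of_surjective _ (fun c => ⟨C c, by simp⟩)

lemma lin_mem_mm {σ : Type} {l : MvPolynomial σ k} (hl : l.IsHomogeneous 1) : l ∈ mm σ k := by
  rw [mm_eq_ker, RingHom.mem_ker]
  exact hl.coeff_eq_zero (by simp)

lemma dim_drop {σ : Type} {J : Ideal (MvPolynomial σ k)} {l : MvPolynomial σ k} {s : ℕ}
    (hl : ∀ p ∈ J.minimalPrimes, l ∈ p → mm σ k ≤ p) (h : DimLE J (s + 1)) :
    DimLE (J ⊔ Ideal.span {l}) s := by
  intro c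
  have hsub : ∀ x : PrimeSpectrum.zeroLocus ((J ⊔ Ideal.span {l} : Ideal _) : Set (MvPolynomial σ k)),
      x.1 ∈ PrimeSpectrum.zeroLocus (J : Set (MvPolynomial σ k)) := fun x =>
    PrimeSpectrum.zeroLocus_anti_mono (by exact_mod_cast (le_sup_left : J ≤ _)) x.2
  have hJp : J ≤ c.head.1.asIdeal := hsub c.head
  obtain ⟨p, hp, hpc⟩ := Ideal.exists_minimalPrimes_le (J := c.head.1.asIdeal) hJp
  by_cases heq : p = c.head.1.asIdeal
  · have hlp : l ∈ p := by
      rw [heq]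
      exact c.head.2 (Ideal.mem_sup_right (Ideal.mem_span_singleton_self l))
    have h1 := hl p hp hlp
    have hmax : c.head.1.asIdeal = mm σ k := by
      rw [heq] at h1
      exact ((mm_max σ).eq_of_le c.head.1.2.ne_top h1).symm
    by_contra hlen
    have hlt : c.head < c.last := c.strictMono (by
      rw [Fin.lt_def]; simp; omega)
    have h2 : c.head.1.asIdeal < c.last.1.asIdeal := hlt
    rw [hmax] at h2
    exact c.last.1.2.ne_top ((mm_max σ).1.2 _ h2)
  · let q : PrimeSpectrum.zeroLocus (J : Set (MvPolynomial σ k)) :=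
      ⟨⟨p, hp.1.1⟩, fun x hx => hp.1.2 hx⟩
    let c' : LTSeries (PrimeSpectrum.zeroLocus (J : Set (MvPolynomial σ k))) :=
      c.map (fun x => ⟨x.1, hsub x⟩) (fun _ _ h => h)
    have hq : q < c'.head := lt_of_le_of_ne hpc fun h => heq (by
      have := congrArg (fun x => x.1.asIdeal) h
      exact this)
    have := h (c'.cons q hq)
    simp [c'] at this
    exact this

lemma gen_linear {N : ℕ} [Infinite k] {S : Set (Ideal (MvPolynomial (Fin N) k))} (hS : S.Finite)
    (h : ∀ p ∈ S, ¬ mm (Fin N) k ≤ p) :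
    ∃ l : MvPolynomial (Fin N) k, l.IsHomogeneous 1 ∧ ∀ p ∈ S, l ∉ p := by
  classical
  let F : Ideal (MvPolynomial (Fin N) k) → Subspace k (homogeneousSubmodule (Fin N) k 1) :=
    fun p => (p.restrictScalars k).comap (Submodule.subtype _)
  have := Subspace.biUnion_ne_univ_of_top_notMem (s := hS.toFinset.image F) (by
    intro hcon
    obtain ⟨p, hp, hpt⟩ := Finset.mem_image.1 hcon
    apply h p (by simpa using hp)
    rw [mm, Ideal.span_le]
    rintro _ ⟨i, rfl⟩
    have : (⟨X i, isHomogeneous_X k i⟩ : homogeneousSubmodule (Fin N) k 1) ∈ F p := by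
      rw [hpt]; trivial
    exact this)
  rw [Set.ne_univ_iff_exists_notMem] at this
  obtain ⟨l, hl⟩ := this
  refine ⟨l.1, l.2, fun p hp hlp => hl ?_⟩
  simp only [Set.mem_iUnion]
  exact ⟨F p, Finset.mem_image_of_mem _ (by simpa using hp), hlp⟩

lemma exists_params {N : ℕ} [Infinite k] (s : ℕ) : ∀ J : Ideal (MvPolynomial (Fin N) k), DimLE J s →
    ∃ T : Finset (MvPolynomial (Fin N) k), T.card ≤ s ∧ (∀ t ∈ T, t.IsHomogeneous 1) ∧
      DimLE (J ⊔ Ideal.span (T : Set (MvPolynomial (Fin N) k))) 0 := by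
  classical
  induction s with
  | zero => exact fun J h => ⟨∅, by simp, by simp, by simpa using h⟩
  | succ s ih =>
    intro J h
    obtain ⟨l, hl, hlp⟩ := gen_linear (S := {p ∈ J.minimalPrimes | ¬ mm (Fin N) k ≤ p})
      ((Ideal.finite_minimalPrimes_of_isNoetherianRing _ J).subset (Set.sep_subset _ _))
      (fun p hp => hp.2)
    obtain ⟨T, hT, hT1, hT2⟩ := ih (J ⊔ Ideal.span {l}) (dim_drop (fun p hp hlp' => by
      by_contra hcon
      exact hlp p ⟨hp, hcon⟩ hlp') h)
    refine ⟨insert l T, (Finset.card_insert_le _ _).trans (by omega), ?_, ?_⟩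
    · intro t ht
      rcases Finset.mem_insert.1 ht with rfl | ht
      · exact hl
      · exact hT1 t ht
    · rw [Finset.coe_insert, Ideal.span_insert, ← sup_assoc]
      exact hT2

lemma fin_of_dim {N : ℕ} {J : Ideal (MvPolynomial (Fin N) k)} (hJ : HH J) (h : DimLE J 0) :
    ∃ M : ℕ, ∀ d, M ≤ d → ∀ p : MvPolynomial (Fin N) k, p.IsHomogeneous d → p ∈ J := by
  rw [dimLE_iff, ← Ring.krullDimLE_iff, ← Module.finite_iff_krullDimLE_zero k] at h
  suffices hs : ∃ M : ℕ, ∀ p : MvPolynomial (Fin N) k, p.IsHomogeneous M → p ∈ J by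
    obtain ⟨M, hM⟩ := hs
    exact ⟨M, fun d hd => homog_mul_le hd hM⟩
  by_contra hcon
  push Not at hcon
  choose f hf hfJ using hcon
  refine Module.Finite.not_linearIndependent_of_infinite (R := k)
    (fun d => Ideal.Quotient.mkₐ k J (f d)) ?_
  rw [linearIndependent_iff']
  intro s g hg i hi
  have h1 : ∑ j ∈ s, g j • f j ∈ J := by
    rw [← Ideal.Quotient.eq_zero_iff_mem]
    have : Ideal.Quotient.mkₐ k J (∑ j ∈ s, g j • f j) = 0 := by
      rw [map_sum, ← hg]
      exact Finset.sum_congr rfl fun j _ => map_smul _ _ _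
    exact this
  have h2 := hJ _ h1 (i : ℤ)
  rw [map_sum, Finset.sum_eq_single i] at h2
  · rw [map_smul, hc_of_homog (Or.inr ⟨i, rfl, hf i⟩)] at h2
    by_contra hgi
    apply hfJ i
    have := J.mul_mem_left (C (g i)⁻¹) h2
    rwa [smul_eq_C_mul, ← mul_assoc, ← C_mul, inv_mul_cancel₀ hgi, C_1, one_mul] at this
  · intro j _ hj
    rw [map_smul, hc_of_homog_ne (Or.inr ⟨j, rfl, hf j⟩) (by exact_mod_cast hj.symm), smul_zero]
  · exact fun h => absurd hi h

lemma red_nonempty {n e : ℕ} [Infinite k] {I : Ideal (MvPolynomial (Fin (n + e + 1)) k)}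
    (hI : IdealHomog k I) (hnd : Nondegenerate k I)
    (hdim : ringKrullDim (MvPolynomial (Fin (n + e + 1)) k ⧸ I) = n + 1) :
    ∃ t, 0 < t ∧ ∃ L : Finset (MvPolynomial (Fin (n + e + 1)) k ⧸ I),
      (L : Set (MvPolynomial (Fin (n + e + 1)) k ⧸ I)) ⊆ quotComponent k I 1 ∧ L.card = n + 1 ∧
      quotComponent k I (t + 1) ≤
        (Ideal.span (L : Set (MvPolynomial (Fin (n + e + 1)) k ⧸ I))).restrictScalars k := by
  classical
  obtain ⟨T, hT, hT1, hT2⟩ := exists_params (n + 1) I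
    ((dimLE_iff _ _).2 (by rw [hdim]; norm_cast))
  obtain ⟨M, hM⟩ := fin_of_dim (HH_sup (HH_of hI) (HH_span fun t ht => ⟨1, hT1 t ht⟩)) hT2
  have hX : X 0 ∉ I := fun h => X_ne_zero (R := k) (0 : Fin (n + e + 1)) (hnd _ h (isHomogeneous_X k 0))
  have hnt : Nontrivial (quotComponent k I 1) := by
    refine ⟨⟨⟨Ideal.Quotient.mk I (X 0), ⟨X 0, isHomogeneous_X k 0, rfl⟩⟩, 0, fun h => hX ?_⟩⟩
    exact Ideal.Quotient.eq_zero_iff_mem.1 (congrArg Subtype.val h)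
  have : Infinite (quotComponent k I 1) := Module.Free.infinite k _
  let T' : Finset (quotComponent k I 1) :=
    T.attach.image fun t => ⟨Ideal.Quotient.mk I t.1, ⟨t.1, hT1 t.1 t.2, rfl⟩⟩
  obtain ⟨L, hL, hLc⟩ := Infinite.exists_superset_card_eq T' (n + 1)
    (Finset.card_image_le.trans (by simpa using hT))
  refine ⟨M + 1, by omega, L.map ⟨Subtype.val, Subtype.val_injective⟩, ?_, by simpa using hLc, ?_⟩
  · intro y hy
    simp only [Finset.coe_map, Function.Embedding.coeFn_mk, Set.mem_image] at hy
    obtain ⟨z, -, rfl⟩ := hy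
    exact z.2
  · rintro _ ⟨p, hp, rfl⟩
    have h1 := hM (M + 1 + 1) (by omega) p hp
    have h2 : Ideal.Quotient.mk I p ∈ (Ideal.span (T : Set _)).map (Ideal.Quotient.mk I) := by
      rw [Ideal.mem_quotient_iff_mem_sup, sup_comm]; exact h1
    rw [Ideal.map_span] at h2
    refine Ideal.span_mono ?_ h2
    rintro _ ⟨t, ht, rfl⟩
    simp only [Finset.coe_map, Function.Embedding.coeFn_mk, Set.mem_image]
    exact ⟨⟨Ideal.Quotient.mk I t, ⟨t, hT1 t ht, rfl⟩⟩,
      hL (Finset.mem_image.2 ⟨⟨t, ht⟩, Finset.mem_attach _ _, rfl⟩), rfl⟩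

end dims
end
end Aux

namespace Aux
open MvPolynomial Paper
noncomputable section

section conv
variable {k : Type} [Field k]

/-- convolution of `Q` with multichoose numbers -/
def cv (Q : ℕ → ℕ) (c d : ℕ) : ℕ := ∑ i ∈ Finset.range (d + 1), Q i * c.multichoose (d - i)

lemma cv_zero (Q : ℕ → ℕ) (d : ℕ) : cv Q 0 d = Q d := by
  rw [cv, Finset.sum_range_succ, Finset.sum_eq_zero]
  · simp
  · intro i hi
    have : i < d := by simpa using hi
    obtain ⟨t, ht⟩ : ∃ t, d - i = t + 1 := ⟨d - i - 1, by omega⟩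
    rw [ht, Nat.multichoose_zero_succ, mul_zero]

lemma cv_at_zero (Q : ℕ → ℕ) (c : ℕ) : cv Q c 0 = Q 0 := by
  simp [cv]

lemma cv_succ (Q : ℕ → ℕ) (c d : ℕ) : cv Q (c + 1) (d + 1) = cv Q (c + 1) d + cv Q c (d + 1) := by
  unfold cv
  rw [Finset.sum_range_succ, Finset.sum_range_succ _ (d + 1), ← add_assoc, ← Finset.sum_add_distrib]
  simp only [Nat.sub_self, Nat.multichoose_zero_right]
  congr 1
  refine Finset.sum_congr rfl fun i hi => ?_
  have : i < d + 1 := by simpa using hi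
  have h : d + 1 - i = (d - i) + 1 := by omega
  rw [h, Nat.multichoose_succ_succ]
  ring

lemma cv_mc (e c d : ℕ) : cv (fun i => e.multichoose i) c d = (c + e).multichoose d := by
  induction c generalizing d with
  | zero => rw [cv_zero, zero_add]
  | succ c ih =>
    induction d with
    | zero => rw [cv_at_zero]; simp
    | succ d ihd =>
      rw [cv_succ, ih, ihd, show c + 1 + e = (c + e) + 1 by ring, Nat.multichoose_succ_succ]
      ring

lemma cv_inj {Q Q' : ℕ → ℕ} {c r : ℕ} (h : ∀ d ≤ r, cv Q c d = cv Q' c d) :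
    ∀ d ≤ r, Q d = Q' d := by
  intro d
  induction d using Nat.strong_induction_on with
  | _ d ih =>
    intro hd
    have h1 := h d hd
    unfold cv at h1
    rw [Finset.sum_range_succ, Finset.sum_range_succ] at h1
    rw [Finset.sum_congr rfl (g := fun i => Q' i * c.multichoose (d - i))] at h1
    · simpa using h1
    · intro i hi
      have : i < d := by simpa using hi
      rw [ih i this (by omega)]

lemma hf_step {N : ℕ} {J : Ideal (MvPolynomial (Fin N) k)} (hJ : HH J)
    {l : MvPolynomial (Fin N) k} (hl : l.IsHomogeneous 1) (hreg : Reg J l) (d : ℕ) :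
    hf J (d + 1) = hf J d + hf (J ⊔ Ideal.span {l}) (d + 1) := by
  let K := J ⊔ Ideal.span {l}
  let V := (homogeneousSubmodule (Fin N) k (d + 1)).map (Ideal.Quotient.mkₐ k J).toLinearMap
  let U := (homogeneousSubmodule (Fin N) k d).map (Ideal.Quotient.mkₐ k J).toLinearMap
  have hfin : Module.Finite k (homogeneousSubmodule (Fin N) k (d + 1)) := finite_homog _
  have hV : Module.Finite k V := Module.Finite.map _ _
  let π : (MvPolynomial (Fin N) k ⧸ J) →ₗ[k] (MvPolynomial (Fin N) k ⧸ K) :=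
    (Ideal.Quotient.factorₐ k (le_sup_left : J ≤ K)).toLinearMap
  have hπ : ∀ p, π (Ideal.Quotient.mk J p) = Ideal.Quotient.mk K p := fun p => rfl
  let g := π.domRestrict V
  have h1 := LinearMap.finrank_range_add_finrank_ker g
  have hr : LinearMap.range g =
      (homogeneousSubmodule (Fin N) k (d + 1)).map (Ideal.Quotient.mkₐ k K).toLinearMap := by
    rw [LinearMap.range_domRestrict, ← Submodule.map_comp]
    rfl
  let μ : (MvPolynomial (Fin N) k ⧸ J) →ₗ[k] (MvPolynomial (Fin N) k ⧸ J) :=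
    LinearMap.mulLeft k (Ideal.Quotient.mk J l)
  have hμ : ∀ p, μ (Ideal.Quotient.mk J p) = Ideal.Quotient.mk J (l * p) := fun p => rfl
  have hmapsV : ∀ u ∈ U, μ u ∈ V := by
    rintro _ ⟨p, hp, rfl⟩
    exact ⟨l * p, by rw [add_comm]; exact hl.mul hp, rfl⟩
  have hker : ∀ u : U, (μ.restrict hmapsV u) ∈ LinearMap.ker g := by
    rintro ⟨_, p, hp, rfl⟩
    rw [LinearMap.mem_ker]
    change Ideal.Quotient.mk K (l * p) = 0
    rw [Ideal.Quotient.eq_zero_iff_mem]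
    exact K.mul_mem_right _ (Ideal.mem_sup_right (Ideal.mem_span_singleton_self l))
  let h : U →ₗ[k] LinearMap.ker g := (μ.restrict hmapsV).codRestrict _ hker
  have hbij : Function.Bijective h := by
    constructor
    · rw [injective_iff_map_eq_zero]
      rintro ⟨_, p, hp, rfl⟩ hu
      have h2 : Ideal.Quotient.mk J (l * p) = 0 := congrArg (fun x => x.1.1) hu
      rw [Ideal.Quotient.eq_zero_iff_mem] at h2
      apply Subtype.ext
      exact Ideal.Quotient.eq_zero_iff_mem.2 (hreg p h2)
    · rintro ⟨⟨_, p, hp, rfl⟩, hv⟩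
      rw [LinearMap.mem_ker] at hv
      have hv' : Ideal.Quotient.mk K p = 0 := hv
      rw [Ideal.Quotient.eq_zero_iff_mem] at hv'
      obtain ⟨q, hq⟩ := exists_sub_of_mem_sup hv'
      have h3 := hJ _ hq ((d + 1 : ℕ) : ℤ)
      rw [map_sub, hc_of_homog (Or.inr ⟨d + 1, rfl, hp⟩), mul_comm l q,
        hc_mul_homog (Or.inr ⟨1, rfl, hl⟩)] at h3
      have h4 : ((d + 1 : ℕ) : ℤ) - ((1 : ℕ) : ℤ) = (d : ℤ) := by push_cast; ring
      rw [h4, hc_nat] at h3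
      refine ⟨⟨Ideal.Quotient.mk J (homogeneousComponent d q),
        ⟨homogeneousComponent d q, homogeneousComponent_isHomogeneous d q, rfl⟩⟩, ?_⟩
      apply Subtype.ext
      apply Subtype.ext
      change Ideal.Quotient.mk J (l * homogeneousComponent d q) = Ideal.Quotient.mk J p
      rw [eq_comm, Ideal.Quotient.eq, mul_comm]
      exact h3
  have h5 := (LinearEquiv.ofBijective h hbij).finrank_eq
  rw [hr, ← h5] at h1
  unfold hf
  change Module.finrank k V = Module.finrank k U + _
  rw [← h1, add_comm]

lemma hf_ext {N : ℕ} {J K : Ideal (MvPolynomial (Fin N) k)} {d : ℕ} (hJK : J ≤ K)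
    (h : ∀ p ∈ K, p.IsHomogeneous d → p ∈ J) : hf J d = hf K d := by
  have hfin : Module.Finite k (homogeneousSubmodule (Fin N) k d) := finite_homog _
  have h1 := LinearMap.finrank_range_add_finrank_ker
    ((Ideal.Quotient.mkₐ k J).toLinearMap.domRestrict (homogeneousSubmodule (Fin N) k d))
  have h2 := LinearMap.finrank_range_add_finrank_ker
    ((Ideal.Quotient.mkₐ k K).toLinearMap.domRestrict (homogeneousSubmodule (Fin N) k d))
  rw [LinearMap.range_domRestrict] at h1 h2
  have h3 : LinearMap.ker ((Ideal.Quotient.mkₐ k J).toLinearMap.domRestrict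
      (homogeneousSubmodule (Fin N) k d)) = LinearMap.ker
      ((Ideal.Quotient.mkₐ k K).toLinearMap.domRestrict (homogeneousSubmodule (Fin N) k d)) := by
    ext p
    rw [LinearMap.mem_ker, LinearMap.mem_ker]
    change Ideal.Quotient.mk J p.1 = 0 ↔ Ideal.Quotient.mk K p.1 = 0
    rw [Ideal.Quotient.eq_zero_iff_mem, Ideal.Quotient.eq_zero_iff_mem]
    exact ⟨fun hp => hJK hp, fun hp => h _ hp p.2⟩
  rw [h3] at h1
  unfold hf
  omega

lemma hf_bot {N : ℕ} (d : ℕ) : hf (⊥ : Ideal (MvPolynomial (Fin N) k)) d = N.multichoose d := by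
  have hfin : Module.Finite k (homogeneousSubmodule (Fin N) k d) := finite_homog _
  have h1 := LinearMap.finrank_range_add_finrank_ker
    ((Ideal.Quotient.mkₐ k (⊥ : Ideal (MvPolynomial (Fin N) k))).toLinearMap.domRestrict
      (homogeneousSubmodule (Fin N) k d))
  rw [LinearMap.range_domRestrict] at h1
  have h3 : LinearMap.ker ((Ideal.Quotient.mkₐ k (⊥ : Ideal (MvPolynomial (Fin N) k))).toLinearMap.domRestrict
      (homogeneousSubmodule (Fin N) k d)) = ⊥ := by
    rw [LinearMap.ker_eq_bot']
    intro p hp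
    have hp' : Ideal.Quotient.mk (⊥ : Ideal (MvPolynomial (Fin N) k)) p.1 = 0 := hp
    rw [Ideal.Quotient.eq_zero_iff_mem] at hp'
    exact Subtype.ext hp'
  rw [h3, finrank_bot, add_zero, finrank_homog, Fintype.card_fin] at h1
  exact h1

lemma hf_step_zero {N : ℕ} {J : Ideal (MvPolynomial (Fin N) k)} (hJ : HH J)
    {l : MvPolynomial (Fin N) k} (hl : l.IsHomogeneous 1) :
    hf J 0 = hf (J ⊔ Ideal.span {l}) 0 := by
  apply hf_ext le_sup_left
  intro p hp hp0
  obtain ⟨q, hq⟩ := exists_sub_of_mem_sup hp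
  have h3 := hJ _ hq ((0 : ℕ) : ℤ)
  rw [map_sub, hc_of_homog (Or.inr ⟨0, rfl, hp0⟩), mul_comm l q,
    hc_mul_homog (Or.inr ⟨1, rfl, hl⟩), hc_neg (by simp), zero_mul, sub_zero] at h3
  exact h3

/-- regular sequences modulo `J`, recursively -/
def RegSeq {A : Type} [CommRing A] : Ideal A → List A → Prop
  | _, [] => True
  | J, x :: xs => Reg J x ∧ RegSeq (J ⊔ Ideal.span {x}) xs

/-- `l` is regular modulo all the partial ideals -/
def AllReg {A : Type} [CommRing A] (l : A) : Ideal A → List A → Prop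
  | _, [] => True
  | J, x :: xs => Reg J l ∧ AllReg l (J ⊔ Ideal.span {x}) xs

/-- the associated primes of all partial quotients -/
def assSet {A : Type} [CommRing A] : Ideal A → List A → Set (Ideal A)
  | _, [] => ∅
  | J, x :: xs => associatedPrimes A (A ⧸ J) ∪ assSet (J ⊔ Ideal.span {x}) xs

lemma reg_iff {A : Type} [CommRing A] [IsNoetherianRing A] (J : Ideal A) (x : A) :
    Reg J x ↔ ∀ p ∈ associatedPrimes A (A ⧸ J), x ∉ p := by
  have h1 : Reg J x ↔ IsSMulRegular (A ⧸ J) x := by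
    rw [isSMulRegular_quotient_iff_mem_of_smul_mem]
    rfl
  have h2 := biUnion_associatedPrimes_eq_compl_regular A (A ⧸ J)
  have h3 : x ∈ ⋃ p ∈ associatedPrimes A (A ⧸ J), (p : Set A) ↔ ¬ Reg J x := by
    rw [h2, h1]; rfl
  rw [← not_iff_not, ← h3]
  simp

lemma assSet_finite {A : Type} [CommRing A] [IsNoetherianRing A] (xs : List A) :
    ∀ J : Ideal A, (assSet J xs).Finite := by
  induction xs with
  | nil => exact fun J => Set.finite_empty
  | cons x xs ih => exact fun J => (associatedPrimes.finite A (A ⧸ J)).union (ih _)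

lemma assSet_not_le {N : ℕ} (xs : List (MvPolynomial (Fin N) k)) :
    ∀ J : Ideal (MvPolynomial (Fin N) k), (∀ x ∈ xs, x ∈ mm (Fin N) k) → RegSeq J xs →
      ∀ p ∈ assSet J xs, ¬ mm (Fin N) k ≤ p := by
  induction xs with
  | nil => intro J _ _ p hp; exact absurd hp (Set.notMem_empty _)
  | cons x xs ih =>
    intro J hx hr p hp
    rcases hp with hp | hp
    · exact fun hle => (reg_iff J x).1 hr.1 p hp (hle (hx x (by simp)))
    · exact ih _ (fun y hy => hx y (by simp [hy])) hr.2 p hp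

lemma allReg_of {A : Type} [CommRing A] [IsNoetherianRing A] {l : A} (xs : List A) :
    ∀ J : Ideal A, (∀ p ∈ assSet J xs, l ∉ p) → AllReg l J xs := by
  induction xs with
  | nil => exact fun J _ => trivial
  | cons x xs ih =>
    intro J h
    exact ⟨(reg_iff J l).2 fun p hp => h p (Or.inl hp), ih _ fun p hp => h p (Or.inr hp)⟩

lemma reg_swap {A : Type} [CommRing A] {J : Ideal A} {x l : A} (hx : Reg J x)
    (hl : Reg (J ⊔ Ideal.span {x}) l) : Reg (J ⊔ Ideal.span {l}) x := by
  intro f hf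
  obtain ⟨g, hg⟩ := exists_sub_of_mem_sup hf
  have h1 : l * g ∈ J ⊔ Ideal.span {x} := by
    have h2 : l * g = -(x * f - l * g) + f * x := by ring
    rw [h2]
    exact Submodule.add_mem_sup (J.neg_mem hg) (Ideal.mul_mem_left _ _ (Ideal.mem_span_singleton_self x))
  obtain ⟨h, hh⟩ := exists_sub_of_mem_sup (hl g h1)
  have h3 : f - l * h ∈ J := by
    apply hx
    have h4 : x * (f - l * h) = (x * f - l * g) + l * (g - x * h) := by ring
    rw [h4]
    exact J.add_mem hg (J.mul_mem_left _ hh)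
  have h5 : f = (f - l * h) + h * l := by ring
  rw [h5]
  exact Submodule.add_mem_sup h3 (Ideal.mul_mem_left _ _ (Ideal.mem_span_singleton_self l))

lemma regSeq_dropLast {A : Type} [CommRing A] {l : A} (xs : List A) :
    ∀ J : Ideal A, RegSeq J xs → AllReg l J xs → RegSeq (J ⊔ Ideal.span {l}) xs.dropLast := by
  induction xs with
  | nil => exact fun J _ _ => trivial
  | cons x xs ih =>
    intro J h1 h2
    cases xs with
    | nil => trivial
    | cons y zs =>
      rw [List.dropLast_cons_cons]
      refine ⟨reg_swap h1.1 h2.2.1, ?_⟩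
      rw [sup_right_comm]
      exact ih _ h1.2 h2.2

lemma dim_drop_reg {N : ℕ} {J : Ideal (MvPolynomial (Fin N) k)} {l : MvPolynomial (Fin N) k} {s : ℕ}
    (hl : Reg J l) (h : DimLE J (s + 1)) : DimLE (J ⊔ Ideal.span {l}) s := by
  apply dim_drop _ h
  intro p hp hlp
  exfalso
  refine (reg_iff J l).1 hl p ?_ hlp
  apply Module.associatedPrimes.minimalPrimes_annihilator_subset_associatedPrimes
  rwa [Ideal.annihilator_quotient]

lemma hilb_of_regSeq {N : ℕ} [Infinite k] (c : ℕ) : ∀ (J : Ideal (MvPolynomial (Fin N) k))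
    (xs : List (MvPolynomial (Fin N) k)), HH J → xs.length = c → (∀ x ∈ xs, x ∈ mm (Fin N) k) →
    RegSeq J xs → DimLE J c →
    ∃ (Q : ℕ → ℕ) (M : ℕ), (∀ i, M < i → Q i = 0) ∧ ∀ d, hf J d = cv Q c d := by
  induction c with
  | zero =>
    intro J xs hJ _ _ _ hd
    obtain ⟨M, hM⟩ := fin_of_dim hJ hd
    refine ⟨hf J, M, ?_, fun d => (cv_zero _ _).symm⟩
    intro i hi
    have : (homogeneousSubmodule (Fin N) k i).map (Ideal.Quotient.mkₐ k J).toLinearMap = ⊥ := by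
      rw [eq_bot_iff]
      rintro _ ⟨p, hp, rfl⟩
      exact Ideal.Quotient.eq_zero_iff_mem.2 (hM i hi.le p hp)
    rw [hf, this, finrank_bot]
  | succ c ih =>
    intro J xs hJ hlen hx hr hd
    obtain ⟨l, hl, hlp⟩ := gen_linear (assSet_finite xs J) (assSet_not_le xs J hx hr)
    have hall := allReg_of xs J hlp
    have hlreg : Reg J l := by
      cases xs with
      | nil => simp at hlen
      | cons x xs => exact hall.1
    obtain ⟨Q, M, hQ, hQ'⟩ := ih (J ⊔ Ideal.span {l}) xs.dropLast
      (HH_sup hJ (HH_span (by rintro t rfl; exact ⟨1, hl⟩))) (by simp [hlen])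
      (fun x hx' => hx x (List.mem_of_mem_dropLast hx')) (regSeq_dropLast xs J hr hall)
      (dim_drop_reg hlreg hd)
    refine ⟨Q, M, hQ, fun d => ?_⟩
    induction d with
    | zero => rw [hf_step_zero hJ hl, hQ', cv_at_zero, cv_at_zero]
    | succ d ihd => rw [hf_step hJ hl hlreg, ihd, hQ', cv_succ]

lemma regSeq_of_get {A : Type} [CommRing A] (xs : List A) : ∀ J : Ideal A,
    (∀ (i : ℕ) (h : i < xs.length), Reg (J ⊔ Ideal.ofList (xs.take i)) xs[i]) → RegSeq J xs := by
  induction xs with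
  | nil => exact fun J _ => trivial
  | cons x xs ih =>
    intro J h
    have h0 := h 0 (by simp)
    rw [List.take_zero, Ideal.ofList_nil, sup_bot_eq] at h0
    refine ⟨h0, ih _ fun i hi => ?_⟩
    have := h (i + 1) (by simpa using hi)
    rw [List.take_succ_cons, Ideal.ofList_cons, ← sup_assoc] at this
    exact this

lemma bwd {n e r : ℕ} [Infinite k] {I : Ideal (MvPolynomial (Fin (n + e + 1)) k)}
    {φ : MvPolynomial (Fin (n + 1) ⊕ Fin e) k ≃ₐ[k] MvPolynomial (Fin (n + e + 1)) k}
    (hG : Good n e r I φ) (hI : IdealHomog k I) (hpt : I ≠ ⊤)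
    (hdim : ringKrullDim (MvPolynomial (Fin (n + e + 1)) k ⧸ I) = n + 1)
    (hcm : IsCMQuot k I (n + 1))
    (hlow : ∀ f ∈ I, ∀ d ≤ r, f.IsHomogeneous d → f = 0) :
    HasDeg k I n ((e + r).choose r) := by
  obtain ⟨rs, hlen, hrs, hreg⟩ := hcm
  obtain ⟨xs, rfl⟩ : ∃ xs : List (MvPolynomial (Fin (n + e + 1)) k),
      xs.map (Ideal.Quotient.mk I) = rs :=
    ⟨rs.map Quotient.out, by simp [Function.comp_def]⟩
  have hxs := regSeq_of_get xs I ((isWeaklyRegular_iff' I xs).1 hreg.toIsWeaklyRegular)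
  have hmm : ∀ x ∈ xs, x ∈ mm (Fin (n + e + 1)) k := by
    intro x hx
    have h1 := hrs _ (List.mem_map_of_mem hx)
    have h3 : irrelevantIdeal k I = (mm (Fin (n + e + 1)) k).map (Ideal.Quotient.mk I) := by
      rw [mm, Ideal.map_span, ← Set.range_comp]; rfl
    rw [h3, Ideal.mem_quotient_iff_mem_sup] at h1
    have h4 : I ≤ mm (Fin (n + e + 1)) k := by
      intro f hf
      rw [mm_eq_ker]
      exact constCoeff_of_mem hI hpt hf
    rwa [sup_eq_left.2 h4] at h1
  obtain ⟨Q, M, hQ, hQ'⟩ := hilb_of_regSeq (n + 1) I xs (HH_of hI) (by simpa using hlen) hmm hxs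
    ((dimLE_iff _ _).2 (by rw [hdim]; norm_cast))
  have hQr : ∀ d ≤ r, Q d = e.multichoose d := by
    refine cv_inj (Q' := fun i => e.multichoose i) (c := n + 1) fun d hd => ?_
    rw [← hQ', cv_mc, ← hf_ext (bot_le : ⊥ ≤ I) (fun p hpI hpd => ?_), hf_bot]
    · congr 1; ring
    · rw [hlow p hpI d hd hpd]; exact Submodule.zero_mem _
  let B := max M r
  let P := hp n B (fun i => (Q i : ℚ))
  have hev : ∀ d, B ≤ d → (hilbFn k I d : ℚ) = P.eval (d : ℚ) := by
    intro d hd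
    rw [hp_eval n B _ d hd, hf_eq, hQ', cv, Nat.cast_sum]
    symm
    have hsub : Finset.range (B + 1) ⊆ Finset.range (d + 1) :=
      Finset.range_subset_range.2 (by omega)
    push_cast
    refine Finset.sum_subset hsub fun i _ hi => ?_
    rw [hQ i (by simp [B] at hi; omega)]
    simp
  have hle : P.coeff n ≤ (hp n r (qe e)).coeff n := by
    refine coeff_le (hp_natDegree _ _ _) (hp_natDegree _ _ _) ?_
    filter_upwards [Filter.eventually_ge_atTop B, good_le hG] with d hd hd'
    rw [← hev d hd]
    exact hd'
  have hge : (hp n r (qe e)).coeff n ≤ P.coeff n := by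
    rw [hp_qe_coeff, hp_coeff, ← sum_multichoose]
    refine mul_le_mul_of_nonneg_right ?_ (by positivity)
    rw [Nat.cast_sum, Finset.sum_congr rfl (g := fun i => (Q i : ℚ))]
    · refine Finset.sum_le_sum_of_subset_of_nonneg (Finset.range_subset_range.2 (by omega)) ?_
      intro i _ _
      positivity
    · intro i hi
      rw [hQr i (by simp at hi; omega)]
  have hc : P.coeff n = ((e + r).choose r : ℚ) * ((n.factorial : ℚ))⁻¹ := by
    rw [← hp_qe_coeff]; exact le_antisymm hle hge
  have hfac : (n.factorial : ℚ) ≠ 0 := by exact_mod_cast n.factorial_ne_zero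
  have hne : P.coeff n ≠ 0 := by
    rw [hc]
    refine mul_ne_zero ?_ (inv_ne_zero hfac)
    exact_mod_cast (Nat.choose_pos (by omega)).ne'
  have hdeg : P.natDegree = n :=
    Polynomial.natDegree_eq_of_le_of_coeff_ne_zero (hp_natDegree _ _ _) hne
  refine ⟨P, hdeg, ?_, ?_⟩
  · rw [Polynomial.leadingCoeff, hdeg, hc, mul_assoc, inv_mul_cancel₀ hfac, mul_one]
  · filter_upwards [Filter.eventually_ge_atTop B] with d hd
    exact hev d hd

end conv
end
end Aux

/-- Theorem 1.1 (equality case): `deg(X) = C(e+r, r)` holds iff the homogeneous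
coordinate ring `R = S₀/I_X` is Cohen-Macaulay with an `(r+1)`-linear minimal free
resolution, i.e. `β_{ij}(R) = 0` unless `i = j = 0`, or `i ≥ 1` and `j = r`. -/
theorem stmt12 (k : Type) [Field k] [IsAlgClosed k] (n e r : ℕ) (he : 0 < e)
    (I : Ideal (MvPolynomial (Fin (n + e + 1)) k))
    (hIhom : Paper.IdealHomog k I) (hsat : Paper.IsSaturatedIdeal k I)
    (hnd : Paper.Nondegenerate k I) (hproper : I ≠ ⊤)
    (hdim : ringKrullDim (MvPolynomial (Fin (n + e + 1)) k ⧸ I) = n + 1)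
    (hr : Paper.redNumAll k I (n + 1) = r) :
    Paper.HasDeg k I n ((e + r).choose r) ↔
      (Paper.IsCMQuot k I (n + 1) ∧
        ∀ res : Paper.MinGradedFreeRes k (Fin (n + e + 1))
            (MvPolynomial (Fin (n + e + 1)) k ⧸ I) (Paper.quotDeg k I),
          ∀ (i : ℕ) (j : ℤ), res.β i j ≠ 0 →
            (i = 0 ∧ j = 0) ∨ (1 ≤ i ∧ j = (r : ℤ))) := by
  have hinf : Infinite k := IsAlgClosed.instInfinite
  obtain ⟨hr0, L, hL, hLc, hred⟩ : r ∈ {t | 0 < t ∧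
      ∃ L : Finset (MvPolynomial (Fin (n + e + 1)) k ⧸ I),
      (L : Set (MvPolynomial (Fin (n + e + 1)) k ⧸ I)) ⊆ Paper.quotComponent k I 1 ∧
      L.card = n + 1 ∧ Paper.quotComponent k I (t + 1) ≤
        (Ideal.span (L : Set (MvPolynomial (Fin (n + e + 1)) k ⧸ I))).restrictScalars k} := by
    rw [← hr]
    exact Nat.sInf_mem (Aux.red_nonempty hIhom hnd hdim)
  obtain ⟨φ, hG⟩ := Aux.exists_good n e r I hIhom L hL hLc hred
  constructor
  · intro hdeg
    exact ⟨Aux.fwd_cm hIhom hproper hG hdeg, fun res i j h => Aux.fwd_lin hG hdeg res i j h⟩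
  · rintro ⟨hcm, hlin⟩
    obtain ⟨res⟩ := Aux.exists_res I hIhom hproper
    exact Aux.bwd hG hIhom hproper hdim hcm
      (Aux.low_of_linear res hIhom hproper (hlin res))
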